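/- arXiv:1305.5569 — 4 statements merged into one kernel-verified Lean document; each statement's English description precedes it below -/
import Mathlib

section
/- Fix a permutation σ. Let P(n) be the probability that for a uniformly random permutation τ of length n, the interval [σ,τ] in the pattern poset contains a subinterval [σ',τ'] with |τ'| − |σ'| ≥ 3 whose open interval (σ',τ') is disconnected. Then P(n) → 1 as n → ∞. -/
open scoped Classical

/-- The set of all (finite) permutations, as patterns: a permutation of length `n`
together with its length. -/
abbrev PermPt := Σ n : ℕ, Equiv.Perm (Fin n)

/-- Pattern containment order: `σ` occurs in `τ` if there is a strictly monotone
choice of positions on which `τ` is order-isomorphic to `σ`. -/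
def ple (σ τ : PermPt) : Prop :=
  ∃ f : Fin σ.1 → Fin τ.1, StrictMono f ∧
    ∀ a b : Fin σ.1, σ.2 a ≤ σ.2 b ↔ τ.2 (f a) ≤ τ.2 (f b)

/-- Strict pattern containment. -/
def plt (σ τ : PermPt) : Prop := ple σ τ ∧ ¬ ple τ σ

/-- Direct sum of permutations. -/
def pds {m n : ℕ} (α : Equiv.Perm (Fin m)) (β : Equiv.Perm (Fin n)) :
    Equiv.Perm (Fin (m + n)) :=
  finSumFinEquiv.symm.trans ((Equiv.sumCongr α β).trans finSumFinEquiv)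

/-- Skew sum of permutations. -/
def pss {m n : ℕ} (α : Equiv.Perm (Fin m)) (β : Equiv.Perm (Fin n)) :
    Equiv.Perm (Fin (m + n)) :=
  finSumFinEquiv.symm.trans
    (((Equiv.sumCongr α β).trans (Equiv.sumComm (Fin m) (Fin n))).trans
      (finSumFinEquiv.trans (finCongr (Nat.add_comm n m))))

/-- Direct sum, as an operation on `PermPt`. -/
def pdsP (a b : PermPt) : PermPt := ⟨a.1 + b.1, pds a.2 b.2⟩

/-- Skew sum, as an operation on `PermPt`. -/
def pssP (a b : PermPt) : PermPt := ⟨a.1 + b.1, pss a.2 b.2⟩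

/-- The empty permutation. -/
def pempty : PermPt := ⟨0, 1⟩

/-- The permutation `1` of length one. -/
def pone : PermPt := ⟨1, 1⟩

/-- A permutation is decomposable if it is the direct sum of two nonempty
permutations, i.e. some proper nonempty initial segment of positions is mapped
to the corresponding initial segment of values. -/
def Decomp {n : ℕ} (σ : Equiv.Perm (Fin n)) : Prop :=
  ∃ m : ℕ, 0 < m ∧ m < n ∧ ∀ i : Fin n, (i : ℕ) < m → (σ i : ℕ) < m

/-- Disconnectedness of a set of permutations under pattern containment:
it splits into two nonempty parts with no comparabilities between them. -/
def Disconn (S : Set PermPt) : Prop :=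
  ∃ A B : Set PermPt, A ∪ B = S ∧ A.Nonempty ∧ B.Nonempty ∧
    ∀ x ∈ A, ∀ y ∈ B, ¬ ple x y ∧ ¬ ple y x

/-- The interval `[σ,τ]` contains a non-trivial disconnected subinterval:
a subinterval `[σ',τ']` with `|τ'| − |σ'| ≥ 3` whose open interval is
disconnected. -/
def HasNTDisc (σ τ : PermPt) : Prop :=
  ∃ σ' τ' : PermPt, ple σ σ' ∧ ple σ' τ' ∧ ple τ' τ ∧ σ'.1 + 3 ≤ τ'.1 ∧
    Disconn {π | plt σ' π ∧ plt π τ'}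

/-- `f` realises an occurrence of `σ` in `τ`. -/
def IsEmb {m n : ℕ} (σ : Equiv.Perm (Fin m)) (τ : Equiv.Perm (Fin n)) (f : Fin m → Fin n) : Prop :=
  StrictMono f ∧ ∀ a b, σ a ≤ σ b ↔ τ (f a) ≤ τ (f b)

lemma IsEmb.comp {l m n : ℕ} {ρ : Equiv.Perm (Fin l)} {σ : Equiv.Perm (Fin m)}
    {τ : Equiv.Perm (Fin n)} {g : Fin m → Fin n} {f : Fin l → Fin m}
    (hg : IsEmb σ τ g) (hf : IsEmb ρ σ f) : IsEmb ρ τ (g ∘ f) :=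
  ⟨hg.1.comp hf.1, fun a b => (hf.2 a b).trans (hg.2 _ _)⟩

/-- Cancel an occurrence on the left. -/
lemma IsEmb.lift {l m n : ℕ} {ρ : Equiv.Perm (Fin l)} {σ : Equiv.Perm (Fin m)}
    {τ : Equiv.Perm (Fin n)} {g : Fin m → Fin n} {h : Fin l → Fin n}
    (hg : IsEmb σ τ g) (hh : IsEmb ρ τ h) (f : Fin l → Fin m) (hf : ∀ i, g (f i) = h i) :
    IsEmb ρ σ f := by
  refine ⟨fun a b hab => ?_, fun a b => ?_⟩
  · have := hh.1 hab
    rw [← hf, ← hf] at this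
    exact hg.1.lt_iff_lt.1 this
  · rw [hh.2, hg.2, hf, hf]

lemma ple_trans' {a b c : PermPt} (h : ple a b) (h' : ple b c) : ple a c := by
  obtain ⟨f, hf⟩ := h
  obtain ⟨g, hg⟩ := h'
  exact ⟨g ∘ f, IsEmb.comp (σ := b.2) hg hf⟩

lemma ple_card {a b : PermPt} (h : ple a b) : a.1 ≤ b.1 := by
  obtain ⟨f, hf, -⟩ := h
  simpa using Fintype.card_le_of_injective f hf.injective

lemma exists_std {l n : ℕ} (u : Fin l → Fin n) (hu : Function.Injective u) :
    ∃ π : Equiv.Perm (Fin l), ∀ a b, π a ≤ π b ↔ u a ≤ u b := by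
  have hc : (Finset.univ.image u).card = l := by
    rw [Finset.card_image_of_injective _ hu]; simp
  let e := (Finset.univ.image u).orderIsoOfFin hc
  let p : Fin l → Fin l := fun a => e.symm ⟨u a, by simp⟩
  have hp : ∀ a b, p a ≤ p b ↔ u a ≤ u b := fun a b => by simp [p]
  have hinj : Function.Injective p := fun a b h => by
    apply hu
    exact le_antisymm ((hp a b).1 h.le) ((hp b a).1 h.ge)
  exact ⟨Equiv.ofBijective p (Finite.injective_iff_bijective.1 hinj), fun a b => by simp [hp]⟩

lemma strictMono_fin_id {M : ℕ} (g : Fin M → Fin M) (hg : StrictMono g) (i : Fin M) : g i = i := by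
  have h : g = id := by
    refine (StrictMono.range_inj hg strictMono_id).1 ?_
    rw [(Finite.injective_iff_surjective.1 hg.injective).range_eq, Set.range_id]
  rw [h]; rfl

lemma pds_castAdd {m n : ℕ} (α : Equiv.Perm (Fin m)) (β : Equiv.Perm (Fin n)) (i : Fin m) :
    pds α β (Fin.castAdd n i) = Fin.castAdd n (α i) := by
  simp [pds]

lemma pds_natAdd {m n : ℕ} (α : Equiv.Perm (Fin m)) (β : Equiv.Perm (Fin n)) (i : Fin n) :
    pds α β (Fin.natAdd m i) = Fin.natAdd m (β i) := by
  simp [pds]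

lemma emb_left {m n : ℕ} (α : Equiv.Perm (Fin m)) (β : Equiv.Perm (Fin n)) :
    IsEmb α (pds α β) (Fin.castAdd n) :=
  ⟨fun a b h => h, fun a b => by
    rw [pds_castAdd, pds_castAdd]; exact Iff.rfl⟩

lemma emb_right {m n : ℕ} (α : Equiv.Perm (Fin m)) (β : Equiv.Perm (Fin n)) :
    IsEmb β (pds α β) (Fin.natAdd m) :=
  ⟨fun a b h => Nat.add_lt_add_left h m, fun a b => by
    rw [pds_natAdd, pds_natAdd]; exact (Nat.add_le_add_iff_left (n := m)).symm⟩

lemma pds_lt_iff {m n : ℕ} (α : Equiv.Perm (Fin m)) (β : Equiv.Perm (Fin n)) (i : Fin (m + n)) :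
    ((pds α β i : Fin (m + n)) : ℕ) < m ↔ (i : ℕ) < m := by
  induction i using Fin.addCases with
  | left i => rw [pds_castAdd]; simp
  | right i => rw [pds_natAdd]; simp

/-- If the first entry of `s` is its maximum, then `s` occurs in `s ⊕ s` only in the two obvious
ways. -/
lemma occ {m : ℕ} (s : Equiv.Perm (Fin (m + 1))) (hs : ∀ i, s i ≤ s 0)
    (f : Fin (m + 1) → Fin ((m + 1) + (m + 1))) (hf : IsEmb s (pds s s) f) :
    (∀ i, f i = Fin.castAdd (m + 1) i) ∨ (∀ i, f i = Fin.natAdd (m + 1) i) := by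
  by_cases h0 : (f 0 : ℕ) < m + 1
  · left
    have hlt : ∀ i, (f i : ℕ) < m + 1 := fun i => by
      rw [← pds_lt_iff s s] at h0 ⊢
      have := (hf.2 i 0).1 (hs i)
      rw [Fin.le_def] at this
      omega
    intro i
    have := strictMono_fin_id (fun i => (⟨f i, hlt i⟩ : Fin (m + 1)))
      (fun a b hab => hf.1 hab) i
    rw [Fin.ext_iff] at this ⊢
    simpa using this
  · right
    have hge : ∀ i, m + 1 ≤ (f i : ℕ) := fun i => by
      have : f 0 ≤ f i := hf.1.monotone (Fin.zero_le i)
      rw [Fin.le_def] at this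
      omega
    intro i
    have := strictMono_fin_id (fun i => (⟨f i - (m + 1), by have := (f i).2; omega⟩ : Fin (m + 1)))
      (fun a b hab => by
        have := hf.1 hab
        have h1 := hge a
        have h2 := hge b
        simp only [Fin.lt_def] at this ⊢
        omega) i
    have h1 := hge i
    rw [Fin.ext_iff] at this ⊢
    simp at this ⊢
    omega

lemma disconn_sum {m : ℕ} (hm : 1 ≤ m) (s : Equiv.Perm (Fin (m + 1))) (hs : ∀ i, s i ≤ s 0) :
    Disconn {π | plt ⟨m + 1, s⟩ π ∧ plt π ⟨(m + 1) + (m + 1), pds s s⟩} := by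
  set S : Set PermPt := {π | plt ⟨m + 1, s⟩ π ∧ plt π ⟨(m + 1) + (m + 1), pds s s⟩} with hS
  refine ⟨{π | π ∈ S ∧ ∃ f, IsEmb π.2 (pds s s) f ∧ ∀ i, ∃ p, f p = Fin.castAdd (m + 1) i},
    {π | π ∈ S ∧ ∃ f, IsEmb π.2 (pds s s) f ∧ ∀ i, ∃ p, f p = Fin.natAdd (m + 1) i},
    ?_, ?_, ?_, ?_⟩
  · ext π
    constructor
    · rintro (h | h) <;> exact h.1
    · intro h
      obtain ⟨c, hc⟩ : ple _ _ := h.1.1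
      obtain ⟨f, hf⟩ : ple _ _ := h.2.1
      rcases occ s hs (f ∘ c) (IsEmb.comp (σ := π.2) hf hc) with h' | h'
      · exact Or.inl ⟨h, f, hf, fun i => ⟨c i, h' i⟩⟩
      · exact Or.inr ⟨h, f, hf, fun i => ⟨c i, h' i⟩⟩
  · let f : Fin (m + 2) → Fin ((m + 1) + (m + 1)) := fun i => ⟨i, by omega⟩
    have hfm : StrictMono f := fun a b h => h
    obtain ⟨π, hπ⟩ := exists_std (fun i => pds s s (f i))
      ((pds s s).injective.comp hfm.injective)
    have hf : IsEmb π (pds s s) f := ⟨hfm, hπ⟩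
    refine ⟨⟨m + 2, π⟩, ⟨⟨⟨fun i : Fin (m + 1) => (⟨i, by omega⟩ : Fin (m + 2)),
      IsEmb.lift hf (emb_left s s) _ fun i => rfl⟩, fun h => ?_⟩, ⟨f, hf⟩, fun h => ?_⟩,
      f, hf, fun i => ⟨(⟨i, by omega⟩ : Fin (m + 2)), rfl⟩⟩
    · have := ple_card h
      simp at this
    · have := ple_card h
      simp at this
      omega
  · let f : Fin (m + 2) → Fin ((m + 1) + (m + 1)) := fun i => ⟨i + m, by omega⟩
    have hfm : StrictMono f := fun a b h => by
      simp only [f, Fin.lt_def] at h ⊢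
      omega
    obtain ⟨π, hπ⟩ := exists_std (fun i => pds s s (f i))
      ((pds s s).injective.comp hfm.injective)
    have hf : IsEmb π (pds s s) f := ⟨hfm, hπ⟩
    have key : ∀ i : Fin (m + 1), f ⟨i + 1, by omega⟩ = Fin.natAdd (m + 1) i := fun i => by
      simp only [f, Fin.ext_iff, Fin.val_natAdd]
      omega
    refine ⟨⟨m + 2, π⟩, ⟨⟨⟨fun i : Fin (m + 1) => (⟨i + 1, by omega⟩ : Fin (m + 2)),
      IsEmb.lift hf (emb_right s s) _ key⟩, fun h => ?_⟩, ⟨f, hf⟩, fun h => ?_⟩,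
      f, hf, fun i => ⟨_, key i⟩⟩
    · have := ple_card h
      simp at this
    · have := ple_card h
      simp at this
      omega
  · -- an element covering both halves is above the sum
    have full : ∀ π : PermPt, π ∈ S → ∀ f, IsEmb π.2 (pds s s) f →
        (∀ i, ∃ p, f p = Fin.castAdd (m + 1) i) → (∀ i, ∃ p, f p = Fin.natAdd (m + 1) i) →
        False := by
      intro π hπ f hf h1 h2
      have h : ∀ i, ∃ p, f p = i := fun i => by
        induction i using Fin.addCases with
        | left i => exact h1 i
        | right i => exact h2 i
      choose g hg using h
      exact hπ.2.2 ⟨g, IsEmb.lift (h := id) hf ⟨strictMono_id, fun a b => Iff.rfl⟩ g hg⟩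
    rintro x ⟨hx, fx, hfx, hxc⟩ y ⟨hy, fy, hfy, hyc⟩
    constructor
    · rintro ⟨g, hg⟩
      choose c hc using hxc
      have hce : IsEmb s x.2 c := IsEmb.lift hfx (emb_left s s) c hc
      obtain ⟨p, hp⟩ : ∃ p, m + 1 ≤ (fx p : ℕ) := by
        by_contra hcon
        push Not at hcon
        exact hx.1.2 ⟨fun p => ⟨fx p, hcon p⟩,
          IsEmb.lift (emb_left s s) hfx _ fun i => rfl⟩
      have hcp : ∀ i, c i < p := fun i => by
        rw [← hfx.1.lt_iff_lt, hc, Fin.lt_def]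
        simp only [Fin.val_castAdd]
        omega
      have hge : IsEmb x.2 y.2 g := hg
      rcases occ s hs _ ((hfy.comp hge).comp hce) with h | h
      · exact full y hy fy hfy (fun i => ⟨_, h i⟩) hyc
      · have h1 := (hfy.comp hge).1 (hcp (Fin.last m))
        have h2 := h (Fin.last m)
        have h3 := ((fy ∘ g) p).2
        rw [Function.comp_apply] at h2
        rw [h2, Fin.lt_def] at h1
        simp only [Fin.val_natAdd, Fin.val_last] at h1
        omega
    · rintro ⟨g, hg⟩
      choose c hc using hyc
      have hce : IsEmb s y.2 c := IsEmb.lift hfy (emb_right s s) c hc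
      obtain ⟨p, hp⟩ : ∃ p, (fy p : ℕ) < m + 1 := by
        by_contra hcon
        push Not at hcon
        refine hy.1.2 ⟨fun p => (⟨fy p - (m + 1), by have := (fy p).2; omega⟩ : Fin (m + 1)),
          IsEmb.lift (emb_right s s) hfy _ fun i => ?_⟩
        have := hcon i
        rw [Fin.ext_iff]
        simp only [Fin.val_natAdd]
        omega
      have hcp : ∀ i, p < c i := fun i => by
        rw [← hfy.1.lt_iff_lt, hc, Fin.lt_def]
        simp only [Fin.val_natAdd]
        omega
      have hge : IsEmb y.2 x.2 g := hg
      rcases occ s hs _ ((hfx.comp hge).comp hce) with h | h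
      · have h1 := (hfx.comp hge).1 (hcp 0)
        have h2 := h 0
        rw [Function.comp_apply] at h2
        rw [h2, Fin.lt_def] at h1
        simp at h1
      · exact full x hx fx hfx hxc (fun i => ⟨_, h i⟩)

/-- Every permutation is contained in one of length at least three starting with its maximum. -/
lemma exists_top {k : ℕ} (σ : Equiv.Perm (Fin k)) :
    ∃ s : Equiv.Perm (Fin (k + 2 + 1)), (∀ i, s i ≤ s 0) ∧ ple ⟨k, σ⟩ ⟨k + 2 + 1, s⟩ := by
  let ρ := pds σ (1 : Equiv.Perm (Fin 2))
  let u : Fin (k + 2 + 1) → Fin (k + 2 + 1) :=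
    Fin.cons (Fin.last (k + 2)) (fun i => (ρ i).castSucc)
  have hu : Function.Injective u := by
    rw [Fin.cons_injective_iff]
    refine ⟨?_, (Fin.castSucc_injective _).comp ρ.injective⟩
    rintro ⟨i, hi⟩
    exact (Fin.castSucc_lt_last (ρ i)).ne hi
  obtain ⟨s, hs⟩ := exists_std u hu
  refine ⟨s, fun i => ?_, ?_⟩
  · rw [hs]
    exact Fin.le_last _
  · have h : IsEmb ρ s Fin.succ := by
      refine ⟨Fin.strictMono_succ, fun a b => ?_⟩
      rw [hs]
      simp [u]
    exact ⟨_, h.comp (emb_left σ 1)⟩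

lemma hasNTDisc_of_ple {k : ℕ} (σ : Equiv.Perm (Fin k)) :
    ∃ (l : ℕ) (π : Equiv.Perm (Fin l)), 0 < l ∧
      ∀ (n : ℕ) (τ : Equiv.Perm (Fin n)), ple ⟨l, π⟩ ⟨n, τ⟩ → HasNTDisc ⟨k, σ⟩ ⟨n, τ⟩ := by
  obtain ⟨s, hs, hle⟩ := exists_top σ
  refine ⟨_, pds s s, by omega, fun n τ h => ⟨⟨_, s⟩, ⟨_, pds s s⟩, hle, ⟨_, emb_left s s⟩, h, ?_,
    disconn_sum (by omega) s hs⟩⟩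
  simp only
  omega

/-- The block shuffling permutation. -/
noncomputable def blockPerm {q l n : ℕ} (e : Fin q × Fin l ↪ Fin n)
    (g : Fin q → Equiv.Perm (Fin l)) : Equiv.Perm (Fin n) :=
  Equiv.Perm.viaEmbedding (Equiv.prodCongrRight g) e

lemma blockPerm_apply {q l n : ℕ} (e : Fin q × Fin l ↪ Fin n)
    (g : Fin q → Equiv.Perm (Fin l)) (j : Fin q) (i : Fin l) :
    blockPerm e g (e (j, i)) = e (j, g j i) := by
  simp [blockPerm, Equiv.Perm.viaEmbedding_apply]

/-- Few permutations avoid a given pattern. -/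
lemma avoid_card {l n q : ℕ} (π : Equiv.Perm (Fin l)) (hq : q * l ≤ n) :
    (Finset.univ.filter fun τ : Equiv.Perm (Fin n) => ¬ ple ⟨l, π⟩ ⟨n, τ⟩).card *
      (Nat.factorial l) ^ q ≤ Nat.factorial n * (Nat.factorial l - 1) ^ q := by
  let e : Fin q × Fin l ↪ Fin n :=
    finProdFinEquiv.toEmbedding.trans (Fin.castLEEmb hq)
  have he : ∀ j, StrictMono fun i => e (j, i) := by
    intro j a b hab
    simp only [e, Fin.lt_def] at hab ⊢
    simp
    omega
  let P : Equiv.Perm (Fin n) → Prop := fun τ => ¬ ple ⟨l, π⟩ ⟨n, τ⟩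
  -- for every `τ` few block shuffles avoid the pattern
  have h1 : ∀ τ : Equiv.Perm (Fin n),
      (Finset.univ.filter fun g : Fin q → Equiv.Perm (Fin l) => P (τ * blockPerm e g)).card ≤
        (Nat.factorial l - 1) ^ q := by
    intro τ
    have hb : ∀ j : Fin q, ∃ h : Equiv.Perm (Fin l), ∀ a b,
        π a ≤ π b ↔ τ (e (j, h a)) ≤ τ (e (j, h b)) := by
      intro j
      obtain ⟨ρ, hρ⟩ := exists_std (fun i => τ (e (j, i)))
        (τ.injective.comp (he j).injective)
      refine ⟨ρ⁻¹ * π, fun a b => ?_⟩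
      rw [← hρ]
      simp
    choose h hh using hb
    have hsub : (Finset.univ.filter fun g : Fin q → Equiv.Perm (Fin l) =>
        P (τ * blockPerm e g)) ⊆ Fintype.piFinset fun j => Finset.univ.erase (h j) := by
      intro g hg
      rw [Finset.mem_filter] at hg
      rw [Fintype.mem_piFinset]
      intro j
      rw [Finset.mem_erase]
      refine ⟨fun hgj => hg.2 ⟨fun i => e (j, i), he j, fun a b => ?_⟩, Finset.mem_univ _⟩
      simp only [Equiv.Perm.mul_apply, blockPerm_apply, hgj]
      exact hh j a b
    refine (Finset.card_le_card hsub).trans ?_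
    rw [Fintype.card_piFinset]
    simp [Finset.card_erase_of_mem, Fintype.card_perm]
  have h2 : ∀ g : Fin q → Equiv.Perm (Fin l),
      (Finset.univ.filter fun τ : Equiv.Perm (Fin n) => P (τ * blockPerm e g)).card =
      (Finset.univ.filter fun τ : Equiv.Perm (Fin n) => P τ).card := by
    intro g
    apply Finset.card_equiv (Equiv.mulRight (blockPerm e g))
    intro τ
    simp
  have h3 : ∑ g : Fin q → Equiv.Perm (Fin l),
      (Finset.univ.filter fun τ : Equiv.Perm (Fin n) => P (τ * blockPerm e g)).card =
      ∑ τ : Equiv.Perm (Fin n),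
      (Finset.univ.filter fun g : Fin q → Equiv.Perm (Fin l) => P (τ * blockPerm e g)).card := by
    simp only [Finset.card_filter]
    exact Finset.sum_comm
  have h4 := Finset.sum_le_sum (s := Finset.univ) fun τ _ => h1 τ
  rw [← h3, Finset.sum_congr rfl fun g _ => h2 g] at h4
  simp only [Finset.sum_const, Finset.card_univ, Fintype.card_perm, Fintype.card_fin,
    Fintype.card_pi, Finset.prod_const, smul_eq_mul] at h4
  rw [mul_comm]
  exact h4

/-- For a fixed permutation `σ`, the probability that `[σ,τ]` contains a
non-trivial disconnected subinterval, for a uniformly random permutation `τ`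
of length `n`, tends to 1 as `n → ∞`. -/
theorem almost_all_have_disconnected_subinterval (k : ℕ) (σ : Equiv.Perm (Fin k)) :
    Filter.Tendsto
      (fun n : ℕ =>
        (Set.ncard {τ : Equiv.Perm (Fin n) | HasNTDisc ⟨k, σ⟩ ⟨n, τ⟩} : ℝ) /
          (Nat.factorial n : ℝ))
      Filter.atTop (nhds 1) := by
  obtain ⟨l, π, hl, hπ⟩ := hasNTDisc_of_ple σ
  set r : ℝ := ((Nat.factorial l - 1 : ℕ) : ℝ) / (Nat.factorial l : ℝ) with hr
  have hlpos : (0 : ℝ) < (Nat.factorial l : ℝ) := by exact_mod_cast Nat.factorial_pos l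
  have hr0 : 0 ≤ r := by positivity
  have hr1 : r < 1 := by
    rw [hr, div_lt_one hlpos]
    have := Nat.factorial_pos l
    exact_mod_cast (by omega : Nat.factorial l - 1 < Nat.factorial l)
  have hlim : Filter.Tendsto (fun n : ℕ => 1 - r ^ (n / l)) Filter.atTop (nhds 1) := by
    have h1 := (tendsto_pow_atTop_nhds_zero_of_lt_one hr0 hr1).comp
      (Nat.tendsto_div_const_atTop hl.ne')
    simpa using h1.const_sub 1
  refine tendsto_of_tendsto_of_tendsto_of_le_of_le hlim tendsto_const_nhds ?_ ?_
  · intro n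
    have hnpos : (0 : ℝ) < (Nat.factorial n : ℝ) := by exact_mod_cast Nat.factorial_pos n
    have h1 := avoid_card π (Nat.div_mul_le_self n l)
    have h2 : (Finset.univ.filter fun τ : Equiv.Perm (Fin n) => ple ⟨l, π⟩ ⟨n, τ⟩).card ≤
        Set.ncard {τ : Equiv.Perm (Fin n) | HasNTDisc ⟨k, σ⟩ ⟨n, τ⟩} := by
      rw [← Set.ncard_coe_finset]
      apply Set.ncard_le_ncard _ (Set.toFinite _)
      intro τ hτ
      simp only [Finset.coe_filter, Finset.mem_univ, true_and, Set.mem_ofPred_eq] at hτ ⊢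
      exact hπ n τ hτ
    have h3 := Finset.card_filter_add_card_filter_not (s := Finset.univ)
      (fun τ : Equiv.Perm (Fin n) => ple ⟨l, π⟩ ⟨n, τ⟩)
    rw [Finset.card_univ, Fintype.card_perm, Fintype.card_fin] at h3
    generalize (Finset.univ.filter fun τ : Equiv.Perm (Fin n) => ple ⟨l, π⟩ ⟨n, τ⟩).card = a
      at h2 h3
    generalize (Finset.univ.filter fun τ : Equiv.Perm (Fin n) => ¬ ple ⟨l, π⟩ ⟨n, τ⟩).card = b
      at h1 h3
    have h1' : (b : ℝ) * (Nat.factorial l : ℝ) ^ (n / l) ≤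
        (Nat.factorial n : ℝ) * ((Nat.factorial l - 1 : ℕ) : ℝ) ^ (n / l) := by
      exact_mod_cast h1
    have h2' : (a : ℝ) ≤ (Set.ncard {τ : Equiv.Perm (Fin n) | HasNTDisc ⟨k, σ⟩ ⟨n, τ⟩} : ℝ) := by
      exact_mod_cast h2
    have h3' : (a : ℝ) + b = (Nat.factorial n : ℝ) := by exact_mod_cast h3
    have h4 : (b : ℝ) ≤ (Nat.factorial n : ℝ) * r ^ (n / l) := by
      rw [hr, div_pow, ← mul_div_assoc, le_div_iff₀ (by positivity)]
      exact h1'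
    show 1 - r ^ (n / l) ≤ _
    rw [le_div_iff₀ hnpos]
    linarith
  · intro n
    have hnpos : (0 : ℝ) < (Nat.factorial n : ℝ) := by exact_mod_cast Nat.factorial_pos n
    show _ / _ ≤ (1 : ℝ)
    rw [div_le_one hnpos]
    have h : Set.ncard {τ : Equiv.Perm (Fin n) | HasNTDisc ⟨k, σ⟩ ⟨n, τ⟩} ≤ Nat.factorial n := by
      refine (Set.ncard_le_card _).trans ?_
      rw [Nat.card_eq_fintype_card, Fintype.card_perm, Fintype.card_fin]
    exact_mod_cast h
end

section
/- Suppose the open interval (σ,τ) in the permutation pattern poset is disconnected. Then for any permutation α, the open interval (α ⊕ σ, α ⊕ τ) is also disconnected. -/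
open scoped Classical

/-- Values of a permutation as a function on `ℕ`, identity outside. -/
def pval (x : PermPt) (a : ℕ) : ℕ := if h : a < x.1 then (x.2 ⟨a, h⟩ : ℕ) else a

lemma pval_lt (x : PermPt) {a : ℕ} (h : a < x.1) : pval x a < x.1 := by
  simp [pval, h]

lemma pval_inj (x : PermPt) {a b : ℕ} (ha : a < x.1) (hb : b < x.1)
    (h : pval x a = pval x b) : a = b := by
  simp only [pval, ha, hb, dif_pos] at h
  have := x.2.injective (Fin.ext h)
  simpa using this

lemma perm_ext {x y : PermPt} (h : x.1 = y.1)
    (hv : ∀ a, a < x.1 → pval x a = pval y a) : x = y := by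
  obtain ⟨n, x⟩ := x
  obtain ⟨m, y⟩ := y
  simp only at h
  subst h
  congr 1
  ext i
  have := hv i i.2
  simpa [pval] using this

lemma pds_len (α x : PermPt) : (pdsP α x).1 = α.1 + x.1 := rfl

lemma pval_left (α x : PermPt) {a : ℕ} (h : a < α.1) : pval (pdsP α x) a = pval α a := by
  have h1 : a < (pdsP α x).1 := by rw [pds_len]; omega
  simp only [pval, h, h1, dif_pos]
  have : (⟨a, h1⟩ : Fin (α.1 + x.1)) = Fin.castAdd x.1 ⟨a, h⟩ := rfl
  change ((pds α.2 x.2 (⟨a, h1⟩ : Fin (α.1 + x.1)) : Fin (α.1 + x.1)) : ℕ) = _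
  rw [this]
  simp only [pds, Equiv.trans_apply, finSumFinEquiv_symm_apply_castAdd, Equiv.sumCongr_apply,
    Sum.map_inl, finSumFinEquiv_apply_left, Fin.val_castAdd]

lemma pval_right (α x : PermPt) (a : ℕ) :
    pval (pdsP α x) (α.1 + a) = α.1 + pval x a := by
  by_cases h : a < x.1
  · have h1 : α.1 + a < (pdsP α x).1 := by rw [pds_len]; omega
    simp only [pval, h, h1, dif_pos]
    have : (⟨α.1 + a, h1⟩ : Fin (α.1 + x.1)) = Fin.natAdd α.1 ⟨a, h⟩ := rfl
    change ((pds α.2 x.2 (⟨α.1 + a, h1⟩ : Fin (α.1 + x.1)) : Fin (α.1 + x.1)) : ℕ) = _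
    rw [this]
    simp only [pds, Equiv.trans_apply, finSumFinEquiv_symm_apply_natAdd, Equiv.sumCongr_apply,
      Sum.map_inr, finSumFinEquiv_apply_right, Fin.val_natAdd]
  · have h1 : ¬ α.1 + a < (pdsP α x).1 := by rw [pds_len]; omega
    simp only [pval, h, h1, dif_neg, not_false_eq_true]

lemma pval_right' (α x : PermPt) {a : ℕ} (h : α.1 ≤ a) :
    pval (pdsP α x) a = α.1 + pval x (a - α.1) := by
  obtain ⟨b, rfl⟩ := Nat.exists_eq_add_of_le h
  rw [pval_right]
  simp

lemma ple_iff (x y : PermPt) : ple x y ↔ ∃ f : ℕ → ℕ, (∀ i, i < x.1 → f i < y.1) ∧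
    (∀ i j, i < j → j < x.1 → f i < f j) ∧
    (∀ i j, i < x.1 → j < x.1 → (pval x i ≤ pval x j ↔ pval y (f i) ≤ pval y (f j))) := by
  constructor
  · rintro ⟨f, hf, h⟩
    refine ⟨fun i => if h : i < x.1 then f ⟨i, h⟩ else 0, ?_, ?_, ?_⟩
    · intro i hi
      simp [hi]
    · intro i j hij hj
      have hi : i < x.1 := hij.trans hj
      simp only [hi, hj, dif_pos]
      exact hf (show (⟨i, hi⟩ : Fin x.1) < ⟨j, hj⟩ from hij)
    · intro i j hi hj
      simpa [pval, hi, hj] using h ⟨i, hi⟩ ⟨j, hj⟩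
  · rintro ⟨f, h1, h2, h3⟩
    refine ⟨fun i => ⟨f i, h1 i i.2⟩, ?_, ?_⟩
    · intro i j hij
      exact h2 i j hij j.2
    · intro i j
      have := h3 i j i.2 j.2
      simpa [pval, h1 i i.2, h1 j j.2] using this

lemma exists_std_s7 (k : ℕ) (v : ℕ → ℕ) (hv : ∀ i j, i < k → j < k → v i = v j → i = j) :
    ∃ x : PermPt, x.1 = k ∧
      ∀ i j, i < k → j < k → (pval x i ≤ pval x j ↔ v i ≤ v j) := by
  let s : Finset ℕ := (Finset.range k).image v
  have hs : s.card = k := by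
    rw [Finset.card_image_of_injOn, Finset.card_range]
    intro i hi j hj h
    exact hv i j (by simpa using hi) (by simpa using hj) h
  let e := s.orderIsoOfFin hs
  have hm : ∀ i : Fin k, v i ∈ s := fun i =>
    Finset.mem_image_of_mem _ (Finset.mem_range.2 i.2)
  let g : Fin k → Fin k := fun i => e.symm ⟨v i, hm i⟩
  have hg : ∀ i j, g i ≤ g j ↔ v i ≤ v j := by
    intro i j
    simp only [g]
    rw [e.symm.le_iff_le]
    rfl
  have hgi : Function.Injective g := by
    intro i j h
    have h1 := (hg i j).1 h.le
    have h2 := (hg j i).1 h.ge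
    exact Fin.ext (hv i j i.2 j.2 (le_antisymm h1 h2))
  refine ⟨⟨k, Equiv.ofBijective g (Finite.injective_iff_bijective.1 hgi)⟩, rfl, ?_⟩
  intro i j hi hj
  have := hg ⟨i, hi⟩ ⟨j, hj⟩
  simpa [pval, hi, hj] using this

lemma sm_le {k : ℕ} {f : ℕ → ℕ} (h2 : ∀ i j, i < j → j < k → f i < f j) :
    ∀ i, i < k → i ≤ f i := by
  intro i
  induction i with
  | zero => intro _; omega
  | succ n ih =>
    intro h
    have := ih (by omega)
    have := h2 n (n+1) (by omega) h
    omega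

lemma ple_len {x y : PermPt} (h : ple x y) : x.1 ≤ y.1 := by
  obtain ⟨f, hf, _⟩ := h
  simpa using Fintype.card_le_of_injective f hf.injective

lemma ple_refl (x : PermPt) : ple x x := ⟨id, strictMono_id, fun _ _ => Iff.rfl⟩

lemma ple_trans {x y z : PermPt} (h : ple x y) (h' : ple y z) : ple x z := by
  obtain ⟨f, hf, h⟩ := h
  obtain ⟨g, hg, h'⟩ := h'
  exact ⟨g ∘ f, hg.comp hf, fun a b => (h a b).trans (h' _ _)⟩

lemma sm_fin_id {n : ℕ} (f : Fin n → Fin n) (hf : StrictMono f) (i : Fin n) : f i = i := by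
  have : (OrderIso.refl (Fin n)) = hf.orderIsoOfSurjective f
    (Finite.injective_iff_surjective.1 hf.injective) := Subsingleton.elim _ _
  have := congrArg (fun e => e i) this
  simpa using this.symm

lemma ple_eq {x y : PermPt} (h : ple x y) (hl : y.1 ≤ x.1) : x = y := by
  have hl' := ple_len h
  obtain ⟨n, x⟩ := x
  obtain ⟨m, y⟩ := y
  have : n = m := le_antisymm hl' hl
  subst this
  obtain ⟨f, hf, h⟩ := h
  simp only at f hf h
  have hid := sm_fin_id f hf
  simp only [hid] at h
  congr 1
  have hs : StrictMono (fun i => y (x.symm i)) := by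
    intro i j hij
    have := h (x.symm j) (x.symm i)
    simp only [Equiv.apply_symm_apply] at this
    exact not_le.1 (fun hh => absurd (this.2 hh) (not_le.2 hij))
  ext i
  have := sm_fin_id _ hs (x i)
  simp only [Equiv.symm_apply_apply] at this
  rw [this]

lemma plt_iff {x y : PermPt} : plt x y ↔ ple x y ∧ x.1 < y.1 := by
  constructor
  · rintro ⟨h, h'⟩
    refine ⟨h, ?_⟩
    by_contra hc
    have := ple_eq h (by omega)
    subst this
    exact h' h
  · rintro ⟨h, h'⟩
    refine ⟨h, fun hc => ?_⟩
    have := ple_len hc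
    omega

lemma plt_of_ne {x y : PermPt} (h : ple x y) (hn : x ≠ y) : plt x y := by
  rw [plt_iff]
  refine ⟨h, ?_⟩
  by_contra hc
  exact hn (ple_eq h (by omega))

lemma ple_antisymm {x y : PermPt} (h : ple x y) (h' : ple y x) : x = y :=
  ple_eq h (ple_len h')

lemma pds_mono {a b x y : PermPt} (h : ple a b) (h' : ple x y) :
    ple (pdsP a x) (pdsP b y) := by
  rw [ple_iff] at *
  obtain ⟨f, f1, f2, f3⟩ := h
  obtain ⟨g, g1, g2, g3⟩ := h'
  refine ⟨fun i => if i < a.1 then f i else b.1 + g (i - a.1), ?_, ?_, ?_⟩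
  · intro i hi
    rw [pds_len] at *
    dsimp only
    split_ifs with h
    · have := f1 i h
      omega
    · have := g1 (i - a.1) (by omega)
      omega
  · intro i j hij hj
    rw [pds_len] at hj
    dsimp only
    split_ifs with h h' h'
    · exact f2 i j hij h'
    · have := f1 i h
      omega
    · omega
    · have := g2 (i - a.1) (j - a.1) (by omega) (by omega)
      omega
  · intro i j hi hj
    rw [pds_len] at hi hj
    dsimp only
    split_ifs with h h' h'
    · rw [pval_left _ _ h, pval_left _ _ h', pval_left _ _ (f1 i h), pval_left _ _ (f1 j h')]
      exact f3 i j h h'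
    · rw [pval_left _ _ h, pval_right' _ _ (not_lt.1 h'), pval_left _ _ (f1 i h), pval_right]
      have := pval_lt a h
      have := pval_lt b (f1 i h)
      constructor <;> intro <;> omega
    · rw [pval_left _ _ h', pval_right' _ _ (not_lt.1 h), pval_left _ _ (f1 j h'), pval_right]
      have := pval_lt a h'
      have := pval_lt b (f1 j h')
      constructor <;> intro <;> omega
    · rw [pval_right' _ _ (not_lt.1 h), pval_right' _ _ (not_lt.1 h'), pval_right, pval_right]
      have := g3 (i - a.1) (j - a.1) (by omega) (by omega)
      omega

lemma pds_cancel {a x y : PermPt} (h : ple (pdsP a x) (pdsP a y)) : ple x y := by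
  rw [ple_iff] at *
  obtain ⟨f, f1, f2, f3⟩ := h
  have hle := sm_le f2
  rw [pds_len] at *
  refine ⟨fun i => f (a.1 + i) - a.1, ?_, ?_, ?_⟩
  · intro i hi
    have := f1 (a.1 + i) (by omega)
    have := hle (a.1 + i) (by omega)
    rw [pds_len] at *
    dsimp only
    omega
  · intro i j hij hj
    have := f2 (a.1 + i) (a.1 + j) (by omega) (by omega)
    have := hle (a.1 + i) (by omega)
    dsimp only
    omega
  · intro i j hi hj
    have h1 := hle (a.1 + i) (by omega)
    have h2 := hle (a.1 + j) (by omega)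
    have := f3 (a.1 + i) (a.1 + j) (by omega) (by omega)
    rw [pval_right, pval_right, pval_right' _ _ (show a.1 ≤ f (a.1+i) by omega),
      pval_right' _ _ (show a.1 ≤ f (a.1+j) by omega)] at this
    dsimp only
    omega

lemma pds_empty {a x : PermPt} (h : a.1 = 0) : pdsP a x = x := by
  apply perm_ext
  · rw [pds_len]; omega
  · intro i _
    rw [pval_right' _ _ (by omega), h]
    simp

lemma pds_assoc (a b c : PermPt) : pdsP (pdsP a b) c = pdsP a (pdsP b c) := by
  apply perm_ext
  · simp only [pds_len]; omega
  · intro i _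
    by_cases h1 : i < a.1
    · rw [pval_left _ _ h1, pval_left _ _ (by rw [pds_len]; omega), pval_left _ _ h1]
    · by_cases h2 : i < a.1 + b.1
      · rw [pval_left _ _ (by rw [pds_len]; omega), pval_right' _ _ (by omega),
          pval_right' _ _ (by omega), pval_left _ _ (by omega)]
      · rw [pval_right' _ _ (by rw [pds_len]; omega), pval_right' a _ (by omega),
          pval_right' b _ (by omega), pds_len, Nat.sub_sub]
        omega

lemma ple_pds_right (a x : PermPt) : ple x (pdsP a x) := by
  rw [ple_iff]
  refine ⟨fun i => a.1 + i, ?_, ?_, ?_⟩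
  · intro i hi
    rw [pds_len]; dsimp only; omega
  · intro i j _ _
    dsimp only; omega
  · intro i j _ _
    dsimp only
    rw [pval_right, pval_right]
    omega

/-- Splitting a permutation. -/
lemma perm_split (x : PermPt) (m : ℕ) (hm : m ≤ x.1)
    (h : ∀ i j, i < m → m ≤ j → j < x.1 → pval x i < pval x j) :
    ∃ b c : PermPt, b.1 = m ∧ x = pdsP b c := by
  obtain ⟨b, hb, hb'⟩ := exists_std_s7 m (pval x) (fun i j hi hj he =>
    pval_inj x (by omega) (by omega) he)
  obtain ⟨c, hc, hc'⟩ := exists_std_s7 (x.1 - m) (fun i => pval x (m + i)) (fun i j hi hj he => by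
    have := pval_inj x (by omega) (by omega) he
    omega)
  refine ⟨b, c, hb, ple_eq ?_ (by rw [pds_len]; omega)⟩
  rw [ple_iff]
  refine ⟨id, ?_, fun i j hij _ => hij, ?_⟩
  · intro i hi
    rw [pds_len]; simp only [id]; omega
  · intro i j hi hj
    simp only [id]
    by_cases h1 : i < m <;> by_cases h2 : j < m
    · rw [pval_left _ _ (by omega), pval_left _ _ (by omega)]
      exact (hb' i j h1 h2).symm
    · rw [pval_left _ _ (by omega), pval_right' _ _ (by omega)]
      have := pval_lt b (show i < b.1 by omega)
      have := h i j h1 (by omega) hj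
      constructor <;> intro <;> omega
    · rw [pval_left _ _ (show j < b.1 by omega), pval_right' _ _ (by omega)]
      have := pval_lt b (show j < b.1 by omega)
      have := h j i h2 (by omega) hi
      constructor <;> intro <;> omega
    · rw [pval_right' _ _ (by omega), pval_right' _ _ (by omega)]
      have := hc' (i - m) (j - m) (by omega) (by omega)
      rw [show m + (i - m) = i by omega, show m + (j - m) = j by omega] at this
      rw [hb]
      omega

lemma ple_pds_split {x b c : PermPt} (h : ple x (pdsP b c)) :
    ∃ b' c', ple b' b ∧ ple c' c ∧ x = pdsP b' c' := by
  rw [ple_iff] at h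
  obtain ⟨f, f1, f2, f3⟩ := h
  have hex : ∃ m, ∀ i, i < x.1 → f i < b.1 → i < m := ⟨x.1, fun i hi _ => hi⟩
  let m := Nat.find hex
  have hm1 : ∀ i, i < x.1 → f i < b.1 → i < m := Nat.find_spec hex
  have hmx : m ≤ x.1 := Nat.find_min' hex (fun i hi _ => hi)
  have hm2 : ∀ i, i < m → f i < b.1 := by
    intro i hi
    have := Nat.find_min hex hi
    push Not at this
    obtain ⟨j, hj, hjb, hij⟩ := this
    rcases hij.eq_or_lt with h | h
    · rwa [h]
    · exact (f2 i j h hj).trans hjb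
  have hm3 : ∀ j, m ≤ j → j < x.1 → b.1 ≤ f j := by
    intro j hj hjx
    by_contra hc
    have := hm1 j hjx (by omega)
    omega
  obtain ⟨b', c', hb', rfl⟩ := perm_split x m hmx (by
    intro i j hi hj hjx
    have h1 := f3 j i hjx (by omega)
    by_contra hc
    have h2 := h1.1 (by omega)
    rw [pval_right' _ _ (hm3 j hj hjx), pval_left _ _ (hm2 i hi)] at h2
    have := pval_lt b (hm2 i hi)
    omega)
  refine ⟨b', c', ?_, ?_, rfl⟩
  · rw [ple_iff]
    refine ⟨f, fun i hi => hm2 i (by omega), ?_, ?_⟩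
    · intro i j hij hj
      exact f2 i j hij (by rw [pds_len]; omega)
    · intro i j hi hj
      have := f3 i j (by rw [pds_len]; omega) (by rw [pds_len]; omega)
      rwa [pval_left _ _ hi, pval_left _ _ hj, pval_left _ _ (hm2 i (by omega)),
        pval_left _ _ (hm2 j (by omega))] at this
  · rw [ple_iff]
    rw [pds_len] at *
    refine ⟨fun i => f (b'.1 + i) - b.1, ?_, ?_, ?_⟩
    · intro i hi
      have := f1 (b'.1 + i) (by omega)
      have := hm3 (b'.1 + i) (by omega) (by omega)
      rw [pds_len] at *
      dsimp only
      omega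
    · intro i j hij hj
      have := f2 (b'.1 + i) (b'.1 + j) (by omega) (by omega)
      have := hm3 (b'.1 + i) (by omega) (by omega)
      dsimp only
      omega
    · intro i j hi hj
      have h1 := hm3 (b'.1 + i) (by omega) (by omega)
      have h2 := hm3 (b'.1 + j) (by omega) (by omega)
      have := f3 (b'.1 + i) (b'.1 + j) (by omega) (by omega)
      rw [pval_right, pval_right, pval_right' _ _ h1, pval_right' _ _ h2] at this
      dsimp only
      omega

lemma decomp_split {a : PermPt} (h : Decomp a.2) :
    ∃ b c : PermPt, b.1 < a.1 ∧ c.1 < a.1 ∧ a = pdsP b c := by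
  obtain ⟨m, h0, hm, h⟩ := h
  have hv : ∀ i, i < m → pval a i < m := by
    intro i hi
    have := h ⟨i, by omega⟩ hi
    simpa [pval, show i < a.1 by omega] using this
  obtain ⟨b, c, hb, rfl⟩ := perm_split a m hm.le (by
    intro i j hi hj hja
    by_contra hc
    have himg : (Finset.range m).image (pval a) = Finset.range m := by
      apply Finset.eq_of_subset_of_card_le
      · intro y hy
        simp only [Finset.mem_image, Finset.mem_range] at *
        obtain ⟨z, hz, rfl⟩ := hy
        exact hv z hz
      · rw [Finset.card_image_of_injOn]
        intro p hp q hq hpq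
        simp only [Finset.coe_range, Set.mem_Iio] at hp hq
        exact pval_inj a (by omega) (by omega) hpq
    have : pval a j ∈ (Finset.range m).image (pval a) := by
      rw [himg, Finset.mem_range]
      have := hv i hi
      omega
    simp only [Finset.mem_image, Finset.mem_range] at this
    obtain ⟨z, hz, he⟩ := this
    have := pval_inj a (by omega) hja he
    omega)
  rw [pds_len] at hm
  exact ⟨b, c, by rw [pds_len]; omega, by rw [pds_len]; omega, rfl⟩

lemma indec_split {a x b c : PermPt} (ha : ¬ Decomp a.2)
    (h : ple (pdsP a x) (pdsP b c)) (hn : ¬ ple a b) : ple (pdsP a x) c := by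
  obtain ⟨b', c', hb, hc, he⟩ := ple_pds_split h
  rcases Nat.eq_zero_or_pos b'.1 with h0 | h0
  · rw [he, pds_empty h0]
    exact hc
  rcases lt_or_ge b'.1 a.1 with h1 | h1
  · exfalso
    apply ha
    refine ⟨b'.1, h0, h1, ?_⟩
    intro i hi
    have h2 : pval a i = pval b' i := by
      rw [← pval_left a x i.2, he, pval_left _ _ hi]
    have h3 := pval_lt b' hi
    rw [← h2] at h3
    simpa [pval] using h3
  · exfalso
    apply hn
    refine ple_trans ?_ hb
    rw [ple_iff]
    refine ⟨id, fun i hi => lt_of_lt_of_le hi h1, fun i j hij _ => hij, ?_⟩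
    intro i j hi hj
    simp only [id]
    rw [← pval_left a x hi, ← pval_left a x hj, he, pval_left _ _ (by omega),
      pval_left _ _ (by omega)]

lemma pone_le {a : PermPt} (h : 0 < a.1) : ple pone a :=
  ⟨fun _ => ⟨0, h⟩, fun i j hij => by
    have : i = j := Subsingleton.elim (α := Fin 1) i j
    exact absurd hij (by simp [this]), fun i j => by
    have : i = j := Subsingleton.elim (α := Fin 1) i j
    simp [this]⟩

lemma pds_plt {a x y : PermPt} : plt (pdsP a x) (pdsP a y) ↔ plt x y := by
  simp only [plt_iff, pds_len]
  constructor
  · rintro ⟨h, h'⟩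
    exact ⟨pds_cancel h, by omega⟩
  · rintro ⟨h, h'⟩
    exact ⟨pds_mono (ple_refl _) h, by omega⟩

lemma core (σ τ α : PermPt) (h0 : 0 < α.1) (hα : ¬ Decomp α.2) (A B : Set PermPt)
    (hAB : A ∪ B = {π | plt σ π ∧ plt π τ}) (hAn : A.Nonempty) (hBn : B.Nonempty)
    (hc : ∀ x ∈ A, ∀ y ∈ B, ¬ ple x y ∧ ¬ ple y x)
    (P : ple (pdsP α σ) τ → pdsP α σ ∈ A ∨ pdsP α σ = τ) :
    Disconn {π | plt (pdsP α σ) π ∧ plt π (pdsP α τ)} := by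
  have hmem : ∀ x, plt σ x → plt x τ → x ∈ A ∨ x ∈ B := by
    intro x h1 h2
    have : x ∈ A ∪ B := by rw [hAB]; exact ⟨h1, h2⟩
    exact this
  have hA : ∀ x ∈ A, plt σ x ∧ plt x τ := by
    intro x hx
    have : x ∈ A ∪ B := Or.inl hx
    rwa [hAB] at this
  have hB : ∀ x ∈ B, plt σ x ∧ plt x τ := by
    intro x hx
    have : x ∈ A ∪ B := Or.inr hx
    rwa [hAB] at this
  -- elements of the form `α ⊕ π`
  have form : ∀ x, plt (pdsP α σ) x → plt x (pdsP α τ) → (∃ p, x = pdsP α p) →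
      (∃ a ∈ A, x = pdsP α a) ∨ (∃ b ∈ B, x = pdsP α b) := by
    rintro x h1 h2 ⟨p, rfl⟩
    rcases hmem p (pds_plt.1 h1) (pds_plt.1 h2) with h | h
    · exact Or.inl ⟨p, h, rfl⟩
    · exact Or.inr ⟨p, h, rfl⟩
  have nonform : ∀ x g, plt (pdsP α σ) x → (¬ ∃ p, x = pdsP α p) → ple x (pdsP α g) →
      ∃ a' p', ple a' α ∧ ¬ ple α a' ∧ ple p' g ∧ x = pdsP a' p' ∧ ple (pdsP α σ) p' := by
    intro x g h1 hn h
    obtain ⟨a', p', ha', hp', rfl⟩ := ple_pds_split h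
    have hna : ¬ ple α a' := by
      intro hh
      exact hn ⟨p', by rw [ple_antisymm ha' hh]⟩
    exact ⟨a', p', ha', hna, hp', rfl, indec_split hα h1.1 hna⟩
  by_cases hb : ∃ b0 ∈ B, pdsP α b0 = τ
  · obtain ⟨b0, hb0, he⟩ := hb
    have hσb := (hB b0 hb0).1
    have hαA : pdsP α σ ∈ A := by
      have hlt : plt (pdsP α σ) τ := by
        rw [← he]
        exact pds_plt.2 hσb
      rcases P hlt.1 with h | h
      · exact h
      · exact absurd (by rw [h]; exact ple_refl _) hlt.2
    have h1 : α.1 = 1 := by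
      by_contra h1
      have hbB : pdsP pone b0 ∈ B := by
        have hle := ple_pds_right pone b0
        have q1 : plt σ (pdsP pone b0) := by
          rw [plt_iff] at *
          have := ple_len hle
          exact ⟨ple_trans hσb.1 hle, by omega⟩
        have q2 : plt (pdsP pone b0) τ := by
          rw [plt_iff, ← he]
          refine ⟨pds_mono (pone_le h0) (ple_refl _), ?_⟩
          simp only [pds_len, pone]
          omega
        rcases hmem (pdsP pone b0) q1 q2 with h | h
        · exact absurd hle (hc _ h _ hb0).2
        · exact h
      have hle : ple (pdsP pone σ) (pdsP α σ) := pds_mono (pone_le h0) (ple_refl _)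
      have hle2 : ple (pdsP pone σ) (pdsP pone b0) := pds_mono (ple_refl _) hσb.1
      have hατ := (hA _ hαA).2
      have q1 : plt σ (pdsP pone σ) := by
        rw [plt_iff]
        refine ⟨ple_pds_right _ _, ?_⟩
        simp only [pds_len, pone]
        omega
      have q2 : plt (pdsP pone σ) τ := by
        rw [plt_iff] at *
        have := ple_len hle
        exact ⟨ple_trans hle hατ.1, by omega⟩
      rcases hmem (pdsP pone σ) q1 q2 with h | h
      · exact (hc _ h _ hbB).1 hle2
      · exact (hc _ hαA _ h).2 hle
    -- with `α` of length one, nonform elements lie below `g`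
    have nf : ∀ x g, plt (pdsP α σ) x → (¬ ∃ p, x = pdsP α p) → ple x (pdsP α g) →
        ple x g := by
      intro x g hx hn hg
      obtain ⟨a', p', ha', hna, hp, rfl, -⟩ := nonform x g hx hn hg
      have hz : a'.1 = 0 := by
        by_contra hz
        have := ple_len ha'
        exact hna (by rw [ple_eq ha' (by omega)]; exact ple_refl _)
      rw [pds_empty hz]
      exact hp
    refine ⟨{x | ∃ a ∈ A, x = pdsP α a},
      {x | (plt (pdsP α σ) x ∧ plt x (pdsP α τ)) ∧ ¬ ∃ a ∈ A, x = pdsP α a}, ?_, ?_, ?_, ?_⟩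
    · ext x
      constructor
      · rintro (⟨a, ha, rfl⟩ | h)
        · exact ⟨pds_plt.2 (hA a ha).1, pds_plt.2 (hA a ha).2⟩
        · exact h.1
      · intro hx
        by_cases h : ∃ a ∈ A, x = pdsP α a
        · exact Or.inl h
        · exact Or.inr ⟨hx, h⟩
    · obtain ⟨a, ha⟩ := hAn
      exact ⟨_, a, ha, rfl⟩
    · obtain ⟨b, hb⟩ := hBn
      refine ⟨pdsP α b, ⟨pds_plt.2 (hB b hb).1, pds_plt.2 (hB b hb).2⟩, ?_⟩
      rintro ⟨a, ha, hh⟩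
      exact (hc a ha b hb).1 (pds_cancel (by rw [← hh]; exact ple_refl _))
    · rintro _ ⟨a, ha, rfl⟩ y ⟨⟨hy1, hy2⟩, hy3⟩
      by_cases hf : ∃ p, y = pdsP α p
      · rcases form y hy1 hy2 hf with h | ⟨b, hb, rfl⟩
        · exact absurd h hy3
        · exact ⟨fun h => (hc a ha b hb).1 (pds_cancel h),
            fun h => (hc a ha b hb).2 (pds_cancel h)⟩
      · have hyτ : ple y (pdsP α b0) := by
          rw [he]
          exact nf y τ hy1 hf hy2.1
        constructor
        · intro h
          exact (hc a ha b0 hb0).1 (pds_cancel (ple_trans h hyτ))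
        · intro h
          have hya := nf y a hy1 hf h
          have hyb := nf y b0 hy1 hf hyτ
          exact (hc _ hαA _ hb0).1 (ple_trans hy1.1 hyb)
  · refine ⟨{x | (plt (pdsP α σ) x ∧ plt x (pdsP α τ)) ∧ ¬ ∃ b ∈ B, x = pdsP α b},
      {x | ∃ b ∈ B, x = pdsP α b}, ?_, ?_, ?_, ?_⟩
    · ext x
      constructor
      · rintro (h | ⟨a, ha, rfl⟩)
        · exact h.1
        · exact ⟨pds_plt.2 (hB a ha).1, pds_plt.2 (hB a ha).2⟩
      · intro hx
        by_cases h : ∃ a ∈ B, x = pdsP α a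
        · exact Or.inr h
        · exact Or.inl ⟨hx, h⟩
    · obtain ⟨b, hb⟩ := hAn
      refine ⟨pdsP α b, ⟨pds_plt.2 (hA b hb).1, pds_plt.2 (hA b hb).2⟩, ?_⟩
      rintro ⟨a, ha, hh⟩
      exact (hc b hb a ha).2 (pds_cancel (by rw [← hh]; exact ple_refl _))
    · obtain ⟨a, ha⟩ := hBn
      exact ⟨_, a, ha, rfl⟩
    · rintro x ⟨⟨hx1, hx2⟩, hx3⟩ _ ⟨b, hbB, rfl⟩
      have hσb := hB b hbB
      by_cases hf : ∃ p, x = pdsP α p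
      · rcases form x hx1 hx2 hf with ⟨a, ha, rfl⟩ | h
        · exact ⟨fun h => (hc a ha b hbB).1 (pds_cancel h),
            fun h => (hc a ha b hbB).2 (pds_cancel h)⟩
        · exact absurd h hx3
      · constructor
        · intro h
          obtain ⟨a', p', ha', hna, hp, rfl, hs⟩ := nonform x b hx1 hf h
          have hsb := ple_trans hs hp
          rcases P (ple_trans hsb hσb.2.1) with h' | h'
          · exact (hc _ h' _ hbB).1 hsb
          · rw [h'] at hsb
            exact hσb.2.2 hsb
        · intro h
          obtain ⟨a', p', ha', hna, hp, rfl, hs⟩ := nonform x τ hx1 hf hx2.1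
          have hbτ : ple (pdsP α b) τ := ple_trans (indec_split hα h hna) hp
          have hσαb : ple (pdsP α σ) (pdsP α b) := pds_mono (ple_refl _) hσb.1.1
          have hlt : plt (pdsP α b) τ := plt_of_ne hbτ (fun hh => hb ⟨b, hbB, hh⟩)
          rcases P (ple_trans hs hp) with h' | h'
          · have hbb := ple_pds_right α b
            have q1 : plt σ (pdsP α b) := by
              have hl := (plt_iff.1 hσb.1).2
              have := ple_len hbb
              exact plt_iff.2 ⟨ple_trans hσb.1.1 hbb, by omega⟩
            rcases hmem (pdsP α b) q1 hlt with h'' | h''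
            · exact (hc _ h'' _ hbB).2 hbb
            · exact (hc _ h' _ h'').1 hσαb
          · rw [h'] at hσαb
            exact hlt.2 hσαb

lemma indec_case (σ τ : PermPt) (h : Disconn {π | plt σ π ∧ plt π τ}) (α : PermPt)
    (h0 : 0 < α.1) (hα : ¬ Decomp α.2) :
    Disconn {π | plt (pdsP α σ) π ∧ plt π (pdsP α τ)} := by
  obtain ⟨A, B, hAB, hA, hB, hc⟩ := h
  by_cases hh : pdsP α σ ∈ B
  · exact core σ τ α h0 hα B A (by rw [Set.union_comm]; exact hAB) hB hA
      (fun x hx y hy => (hc y hy x hx).symm) (fun _ => Or.inl hh)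
  · refine core σ τ α h0 hα A B hAB hA hB hc ?_
    intro hle
    by_cases he : pdsP α σ = τ
    · exact Or.inr he
    · left
      have : pdsP α σ ∈ A ∪ B := by
        rw [hAB]
        refine ⟨?_, plt_of_ne hle he⟩
        rw [plt_iff]
        exact ⟨ple_pds_right _ _, by rw [pds_len]; omega⟩
      exact this.resolve_right hh

lemma all_case (n : ℕ) : ∀ (σ τ : PermPt), Disconn {π | plt σ π ∧ plt π τ} →
    ∀ α : PermPt, α.1 ≤ n → Disconn {π | plt (pdsP α σ) π ∧ plt π (pdsP α τ)} := by
  induction n with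
  | zero =>
    intro σ τ h α hα
    rw [pds_empty (by omega), pds_empty (by omega)]
    exact h
  | succ n ih =>
    intro σ τ h α hα
    rcases Nat.eq_zero_or_pos α.1 with h0 | h0
    · rw [pds_empty h0, pds_empty h0]
      exact h
    by_cases hd : Decomp α.2
    · obtain ⟨b, c, hb, hc, rfl⟩ := decomp_split hd
      rw [pds_assoc, pds_assoc]
      exact ih _ _ (ih σ τ h c (by omega)) b (by omega)
    · exact indec_case σ τ h α h0 hd

/-- If the open interval `(σ,τ)` is disconnected, then for any permutation `α`
the open interval `(α ⊕ σ, α ⊕ τ)` is also disconnected. -/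
theorem disconn_of_augment (σ τ : PermPt)
    (h : Disconn {π | plt σ π ∧ plt π τ}) (α : PermPt) :
    Disconn {π | plt (pdsP α σ) π ∧ plt π (pdsP α τ)} := by
  exact all_case α.1 σ τ h α le_rfl
end

section
/- Let σ and τ be nonempty permutations with finest decompositions σ = σ₁ ⊕ ⋯ ⊕ σ_s and τ = τ₁ ⊕ ⋯ ⊕ τ_t with t ≥ 2 and |τ₁| > 1. Let k ≥ 1 be the largest integer such that τ₁ = ⋯ = τ_k. Then μ(σ,τ) = Σ_{i=1}^{s} Σ_{j=1}^{k} μ(σ_{≤i}, τ₁) · μ(σ_{>i}, τ_{>j}). -/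
open scoped Classical

/-- Direct sum of a list of permutations. -/
def psum (l : List PermPt) : PermPt := l.foldr pdsP pempty

/-- `mu` is the Möbius function of the pattern poset (including the empty
permutation): `mu x x = 1`, `mu x z = 0` when `x ≰ z`, and the values of `mu`
on an interval `[x,z]` with `x < z` sum to zero. -/
def IsMobius (mu : PermPt → PermPt → ℤ) : Prop :=
  (∀ x : PermPt, mu x x = 1) ∧
  (∀ x z : PermPt, ¬ ple x z → mu x z = 0) ∧
  (∀ x z : PermPt, ple x z → x ≠ z →
    ∑ᶠ y ∈ {y : PermPt | ple x y ∧ ple y z}, mu x y = 0)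

namespace PatMob

/-! ### Permutations as functions on naturals -/

noncomputable def vf (x : PermPt) (i : ℕ) : ℕ := if h : i < x.1 then (x.2 ⟨i, h⟩ : ℕ) else i

lemma vf_fin (x : PermPt) (i : Fin x.1) : vf x i = (x.2 i : ℕ) := by simp [vf]

lemma vf_lt (x : PermPt) {i : ℕ} (h : i < x.1) : vf x i < x.1 := by
  simp [vf, h]

lemma vf_inj (x : PermPt) {i j : ℕ} (hi : i < x.1) (hj : j < x.1) (h : vf x i = vf x j) :
    i = j := by
  simp only [vf, hi, hj, dif_pos] at h
  have := x.2.injective (Fin.ext h)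
  simpa using this

lemma vf_ext {x y : PermPt} (h : x.1 = y.1) (h2 : ∀ i < x.1, vf x i = vf y i) : x = y := by
  obtain ⟨n, x⟩ := x
  obtain ⟨m, y⟩ := y
  dsimp only at h h2
  subst h
  congr 1
  ext i
  have := h2 i i.2
  simpa [vf] using this

lemma exists_vf (n : ℕ) (g : ℕ → ℕ) (hg : ∀ i < n, g i < n)
    (hinj : ∀ i < n, ∀ j < n, g i = g j → i = j) :
    ∃ x : PermPt, x.1 = n ∧ ∀ i < n, vf x i = g i := by
  let f : Fin n → Fin n := fun i => ⟨g i, hg i i.2⟩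
  have hf : Function.Injective f := by
    intro i j h
    exact Fin.ext (hinj i i.2 j j.2 (by simpa [f] using h))
  refine ⟨⟨n, Equiv.ofBijective f (Finite.injective_iff_bijective.1 hf)⟩, rfl, ?_⟩
  intro i hi
  simp [vf, hi, f]

lemma vf_pdsP (a b : PermPt) (i : ℕ) :
    vf (pdsP a b) i = if i < a.1 then vf a i else a.1 + vf b (i - a.1) := by
  by_cases h : i < a.1
  · have h' : i < a.1 + b.1 := by omega
    have : (⟨i, h'⟩ : Fin (a.1 + b.1)) = Fin.castAdd b.1 ⟨i, h⟩ := rfl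
    have e : vf (pdsP a b) i = (pds a.2 b.2 ⟨i, h'⟩ : ℕ) := by
      exact dif_pos h'
    rw [e, this, if_pos h]
    simp [pds, vf, h, -Fin.castAdd_mk]
  · by_cases h' : i < a.1 + b.1
    · have h2 : i - a.1 < b.1 := by omega
      have : (⟨i, h'⟩ : Fin (a.1 + b.1)) = Fin.natAdd a.1 ⟨i - a.1, h2⟩ := by
        ext; simp; omega
      have e : vf (pdsP a b) i = (pds a.2 b.2 ⟨i, h'⟩ : ℕ) := by
        exact dif_pos h'
      rw [e, this, if_neg h]
      simp [pds, vf, h2, -Fin.natAdd_mk]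
    · have h2 : ¬ i - a.1 < b.1 := by omega
      have e : vf (pdsP a b) i = i := by
        exact dif_neg h'
      rw [e, if_neg h]
      simp only [vf, h2, dif_neg, not_false_eq_true]
      omega

@[simp] lemma pdsP_fst (a b : PermPt) : (pdsP a b).1 = a.1 + b.1 := rfl
@[simp] lemma pempty_fst : pempty.1 = 0 := rfl

lemma eq_pempty {x : PermPt} (h : x.1 = 0) : x = pempty :=
  vf_ext h (fun i hi => by omega)

lemma eq_pone {x : PermPt} (h : x.1 = 1) : x = pone := by
  refine vf_ext h (fun i hi => ?_)
  have h1 := vf_lt x hi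
  have h2 := vf_lt pone (i := i) (by change i < 1; omega)
  change _ < 1 at h2
  omega

lemma pdsP_pempty (x : PermPt) : pdsP x pempty = x := by
  refine vf_ext (by simp) (fun i hi => ?_)
  rw [vf_pdsP, if_pos (by simpa using hi)]

lemma pempty_pdsP (x : PermPt) : pdsP pempty x = x := by
  refine vf_ext (by simp) (fun i hi => ?_)
  rw [vf_pdsP]; simp

lemma pdsP_assoc (x y z : PermPt) : pdsP (pdsP x y) z = pdsP x (pdsP y z) := by
  refine vf_ext (by simp [add_assoc]) (fun i hi => ?_)
  simp only [vf_pdsP, pdsP_fst]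
  by_cases h1 : i < x.1
  · simp [h1, show i < x.1 + y.1 by omega]
  · by_cases h2 : i < x.1 + y.1
    · simp [h1, h2, show i - x.1 < y.1 by omega]
    · simp [h1, h2, show ¬ i - x.1 < y.1 by omega, Nat.sub_sub, add_assoc]

lemma psum_cons (a : PermPt) (l : List PermPt) : psum (a :: l) = pdsP a (psum l) := rfl
lemma psum_nil : psum [] = pempty := rfl
lemma psum_single (a : PermPt) : psum [a] = a := by rw [psum_cons, psum_nil, pdsP_pempty]

lemma psum_append (l l' : List PermPt) : psum (l ++ l') = pdsP (psum l) (psum l') := by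
  induction l with
  | nil => simp [psum_nil, pempty_pdsP]
  | cons a l ih => simp [psum_cons, ih, pdsP_assoc]

lemma decomp_iff (x : PermPt) :
    Decomp x.2 ↔ ∃ m, 0 < m ∧ m < x.1 ∧ ∀ i < m, vf x i < m := by
  constructor
  · rintro ⟨m, h0, h1, h⟩
    refine ⟨m, h0, h1, fun i hi => ?_⟩
    have := h ⟨i, by omega⟩ hi
    simpa [vf, show i < x.1 by omega] using this
  · rintro ⟨m, h0, h1, h⟩
    refine ⟨m, h0, h1, fun i hi => ?_⟩
    rw [← vf_fin]; exact h _ hi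

/-! ### Containment -/

lemma ple_iff (x y : PermPt) : ple x y ↔ ∃ f : ℕ → ℕ, (∀ i < x.1, f i < y.1) ∧
    (∀ i j, i < j → j < x.1 → f i < f j) ∧
    (∀ i < x.1, ∀ j < x.1, vf x i ≤ vf x j ↔ vf y (f i) ≤ vf y (f j)) := by
  constructor
  · rintro ⟨f, hf, h⟩
    refine ⟨fun i => if hi : i < x.1 then (f ⟨i, hi⟩ : ℕ) else 0, ?_, ?_, ?_⟩
    · intro i hi; simp [hi]
    · intro i j hij hj
      have hi : i < x.1 := by omega
      simp only [hi, hj, dif_pos]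
      exact hf (by simpa using hij)
    · intro i hi j hj
      simp only [hi, hj, dif_pos, vf_fin]
      have := h ⟨i, hi⟩ ⟨j, hj⟩
      simpa [vf, hi, hj] using this
  · rintro ⟨f, h0, h1, h2⟩
    refine ⟨fun i => ⟨f i, h0 i i.2⟩, ?_, ?_⟩
    · intro i j hij
      exact h1 i j hij j.2
    · intro a b
      have := h2 a a.2 b b.2
      rw [vf_fin, vf_fin] at this
      simp only [vf, h0 a a.2, h0 b b.2, dif_pos] at this
      exact this

lemma ple_refl (x : PermPt) : ple x x := ⟨id, strictMono_id, by simp⟩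

lemma ple_trans {x y z : PermPt} : ple x y → ple y z → ple x z := by
  rintro ⟨f, hf, h⟩ ⟨g, hg, h'⟩
  exact ⟨g ∘ f, hg.comp hf, fun a b => (h a b).trans (h' _ _)⟩

lemma ple_size {x y : PermPt} : ple x y → x.1 ≤ y.1 := by
  rintro ⟨f, hf, -⟩
  simpa using Fintype.card_le_of_injective f hf.injective

lemma strictMono_eq_id {n : ℕ} {f : Fin n → Fin n} (hf : StrictMono f) : f = id := by
  have hb : Function.Surjective f := Finite.injective_iff_surjective.1 hf.injective
  have := Subsingleton.elim (hf.orderIsoOfSurjective f hb) (OrderIso.refl _)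
  ext i
  have h2 := congrArg (fun e : Fin n ≃o Fin n => e i) this
  simpa using congrArg Fin.val h2

lemma ple_eq {x y : PermPt} (h : ple x y) (hs : y.1 ≤ x.1) : x = y := by
  have hs' := le_antisymm (ple_size h) hs
  obtain ⟨n, x⟩ := x
  obtain ⟨m, y⟩ := y
  dsimp only at hs'
  subst hs'
  obtain ⟨f, hf, h⟩ := h
  dsimp only at f hf h
  have hfid : f = id := by
    exact strictMono_eq_id hf
  subst hfid
  congr 1
  have hmono : StrictMono (fun i => y (x.symm i)) := by
    intro i j hij
    have := h (x.symm j) (x.symm i)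
    simp only [Equiv.apply_symm_apply, id] at this
    exact not_le.1 (fun hh => (not_le.2 hij) (this.2 hh))
  have : (fun i => y (x.symm i)) = id := by
    exact strictMono_eq_id hmono
  ext i
  have := congrFun this (x i)
  simp at this
  rw [this]

lemma ple_antisymm {x y : PermPt} (h : ple x y) (h' : ple y x) : x = y := ple_eq h (ple_size h')

lemma pempty_ple (x : PermPt) : ple pempty x := by
  rw [ple_iff]
  exact ⟨id, by simp, by simp, by simp⟩

lemma pone_ple {x : PermPt} (h : 0 < x.1) : ple pone x := by
  rw [ple_iff]
  refine ⟨fun _ => 0, ?_, ?_, ?_⟩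
  · intro i _; exact h
  · intro i j hij hj; change j < 1 at hj; omega
  · intro i hi j hj
    change i < 1 at hi
    change j < 1 at hj
    obtain rfl : i = j := by omega
    simp

lemma ple_pdsP {a b c d : PermPt} (h : ple a c) (h' : ple b d) : ple (pdsP a b) (pdsP c d) := by
  rw [ple_iff] at *
  obtain ⟨f, f0, f1, f2⟩ := h
  obtain ⟨g, g0, g1, g2⟩ := h'
  have key1 : ∀ i, i < a.1 → vf (pdsP c d) (f i) = vf c (f i) := fun i hi => by
    rw [vf_pdsP, if_pos (f0 i hi)]
  have key2 : ∀ i, vf (pdsP c d) (c.1 + g i) = c.1 + vf d (g i) := fun i => by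
    rw [vf_pdsP, if_neg (by omega)]; simp
  refine ⟨fun i => if i < a.1 then f i else c.1 + g (i - a.1), ?_, ?_, ?_⟩
  · intro i hi
    simp only [pdsP_fst] at hi ⊢
    split_ifs with h1
    · have := f0 i h1; omega
    · have := g0 (i - a.1) (by omega); omega
  · intro i j hij hj
    simp only [pdsP_fst] at hj ⊢
    split_ifs with h1 h2 h2
    · exact f1 i j hij h2
    · have := f0 i h1; omega
    · omega
    · have := g1 (i - a.1) (j - a.1) (by omega) (by omega); omega
  · intro i hi j hj
    simp only [pdsP_fst] at hi hj
    by_cases hia : i < a.1 <;> by_cases hja : j < a.1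
    · simp only [hia, hja, if_true, key1]
      rw [vf_pdsP, vf_pdsP, if_pos hia, if_pos hja]
      exact f2 i hia j hja
    · simp only [hia, hja, if_true, if_false, key1, key2]
      rw [vf_pdsP, vf_pdsP, if_pos hia, if_neg hja]
      have := vf_lt a hia
      have := vf_lt c (f0 i hia)
      constructor <;> intro <;> omega
    · simp only [hia, hja, if_true, if_false, key1, key2]
      rw [vf_pdsP, vf_pdsP, if_neg hia, if_pos hja]
      have := vf_lt a hja
      have := vf_lt c (f0 j hja)
      constructor <;> intro <;> omega
    · simp only [hia, hja, if_false, key2]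
      rw [vf_pdsP, vf_pdsP, if_neg hia, if_neg hja]
      have := g2 (i - a.1) (by omega) (j - a.1) (by omega)
      simpa using this

lemma split_at (x : PermPt) (m : ℕ) (hm : m ≤ x.1) (h : ∀ i < m, vf x i < m) :
    ∃ a b : PermPt, a.1 = m ∧ x = pdsP a b := by
  obtain ⟨a, ha, hav⟩ := exists_vf m (vf x) h
    (fun i hi j hj => vf_inj x (by omega) (by omega))
  have hge : ∀ i, m ≤ i → i < x.1 → m ≤ vf x i := by
    intro i hi hix
    by_contra hlt
    push Not at hlt
    have : vf x i < a.1 := by omega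
    let j := a.2.symm ⟨vf x i, this⟩
    have hj : vf a j = vf x i := by rw [vf_fin]; simp [j]
    have hjm : (j : ℕ) < m := by have := j.2; omega
    rw [hav j hjm] at hj
    have := vf_inj x (by omega) hix hj
    omega
  obtain ⟨b, hb, hbv⟩ := exists_vf (x.1 - m) (fun i => vf x (m + i) - m)
    (fun i hi => by have := vf_lt x (i := m + i) (by omega); omega)
    (fun i hi j hj hij => by
      have h1 := hge (m + i) (by omega) (by omega)
      have h2 := hge (m + j) (by omega) (by omega)
      have := vf_inj x (i := m + i) (j := m + j) (by omega) (by omega) (by omega)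
      omega)
  refine ⟨a, b, ha, vf_ext (by simp; omega) (fun i hi => ?_)⟩
  rw [vf_pdsP]
  split_ifs with h1
  · rw [hav i (by omega)]
  · rw [hbv _ (by omega)]
    have := hge i (by omega) hi
    rw [ha, show m + (i - m) = i by omega]
    omega

lemma initial_lt (x : PermPt) (m : ℕ) (hm : m ≤ x.1)
    (h : ∀ i < m, ∀ j, m ≤ j → j < x.1 → vf x i < vf x j) : ∀ i < m, vf x i < m := by
  intro i hi
  have hix : i < x.1 := by omega
  let S : Finset (Fin x.1) := (Finset.Iic (x.2 ⟨i, hix⟩)).map x.2.symm.toEmbedding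
  have hS : S.card = vf x i + 1 := by
    simp [S, vf, hix]
  have hsub : S.image (fun k : Fin x.1 => (k : ℕ)) ⊆ Finset.range m := by
    intro k hk
    simp only [Finset.mem_image, S, Finset.mem_map, Finset.mem_Iic] at hk
    obtain ⟨k', ⟨y, hy, rfl⟩, rfl⟩ := hk
    simp only [Finset.mem_range]
    by_contra hcon
    push Not at hcon
    have h1 := h i hi _ hcon (Fin.is_lt _)
    rw [vf_fin] at h1
    simp only [vf, hix, dif_pos, Equiv.coe_toEmbedding, Equiv.apply_symm_apply] at h1
    exact absurd hy (not_le.2 (by simpa using h1))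
  have hc := Finset.card_le_card hsub
  rw [Finset.card_image_of_injective _ Fin.val_injective, hS, Finset.card_range] at hc
  omega

lemma ple_pdsP_split {x c d : PermPt} (h : ple x (pdsP c d)) :
    ∃ a b, x = pdsP a b ∧ ple a c ∧ ple b d := by
  obtain ⟨f, f0, f1, f2⟩ := (ple_iff _ _).1 h
  -- the number of positions sent to the first summand
  obtain ⟨m, hm, hm1, hm2⟩ : ∃ m ≤ x.1, (∀ i < m, f i < c.1) ∧
      (∀ i, m ≤ i → i < x.1 → c.1 ≤ f i) := by
    by_cases hex : ∃ i, i < x.1 ∧ c.1 ≤ f i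
    · refine ⟨Nat.find hex, (Nat.find_spec hex).1.le, ?_, ?_⟩
      · intro i hi
        have h1 := Nat.find_min hex hi
        have h2 := (Nat.find_spec hex).1
        by_contra hcon
        exact h1 ⟨by omega, by omega⟩
      · intro i hi hix
        have h2 := (Nat.find_spec hex).2
        rcases hi.eq_or_lt with h3 | h3
        · rw [← h3]; exact h2
        · have := f1 _ _ h3 hix; omega
    · push Not at hex
      exact ⟨x.1, le_rfl, hex, fun i h1 h2 => by omega⟩
  have hv1 : ∀ i < m, vf (pdsP c d) (f i) = vf c (f i) := fun i hi => by
    rw [vf_pdsP, if_pos (hm1 i hi)]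
  have hv2 : ∀ i, m ≤ i → i < x.1 → vf (pdsP c d) (f i) = c.1 + vf d (f i - c.1) :=
    fun i hi hix => by
      have := hm2 i hi hix
      rw [vf_pdsP, if_neg (by omega)]
  have hpre : ∀ i < m, vf x i < m := by
    apply initial_lt x m hm
    intro i hi j hj hjx
    by_contra hcon
    push Not at hcon
    rw [f2 j hjx i (by omega), hv1 i hi, hv2 j hj hjx] at hcon
    have := vf_lt c (hm1 i hi)
    omega
  obtain ⟨a, b, rfl, rfl⟩ := split_at x m hm hpre
  simp only [pdsP_fst] at *
  refine ⟨a, b, rfl, ?_, ?_⟩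
  · rw [ple_iff]
    refine ⟨f, hm1, fun i j hij hj => f1 i j hij (by omega), fun i hi j hj => ?_⟩
    have := f2 i (by omega) j (by omega)
    rwa [hv1 i hi, hv1 j hj, vf_pdsP, vf_pdsP, if_pos hi, if_pos hj] at this
  · rw [ple_iff]
    refine ⟨fun i => f (a.1 + i) - c.1, fun i hi => ?_, fun i j hij hj => ?_,
      fun i hi j hj => ?_⟩
    · have h1 := f0 (a.1 + i) (by omega)
      have h2 := hm2 (a.1 + i) (by omega) (by omega)
      dsimp only; omega
    · have h1 := f1 (a.1 + i) (a.1 + j) (by omega) (by omega)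
      have h2 := hm2 (a.1 + i) (by omega) (by omega)
      dsimp only; omega
    · have := f2 (a.1 + i) (by omega) (a.1 + j) (by omega)
      rw [hv2 _ (by omega) (by omega), hv2 _ (by omega) (by omega), vf_pdsP, vf_pdsP,
        if_neg (by omega), if_neg (by omega)] at this
      simpa using this

/-! ### Words of indecomposables -/

abbrev Ind := {p : PermPt // 0 < p.1 ∧ ¬ Decomp p.2}

def wsum (w : List Ind) : PermPt := psum (w.map Subtype.val)

lemma wsum_nil : wsum [] = pempty := rfl
lemma wsum_cons (a : Ind) (w : List Ind) : wsum (a :: w) = pdsP a.1 (wsum w) := rfl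
lemma wsum_single (a : Ind) : wsum [a] = a.1 := psum_single _
lemma wsum_append (u v : List Ind) : wsum (u ++ v) = pdsP (wsum u) (wsum v) := by
  unfold wsum; rw [List.map_append, psum_append]

lemma pdsP_size_le {a b : Ind} {x y : PermPt} (h : pdsP a.1 x = pdsP b.1 y) :
    b.1.1 ≤ a.1.1 := by
  by_contra hlt
  push Not at hlt
  apply b.2.2
  rw [decomp_iff]
  refine ⟨a.1.1, a.2.1, hlt, fun i hi => ?_⟩
  have h1 : vf (pdsP a.1 x) i = vf (pdsP b.1 y) i := by rw [h]
  rw [vf_pdsP, vf_pdsP, if_pos hi, if_pos (by omega)] at h1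
  rw [← h1]; exact vf_lt _ hi

lemma pdsP_cancel {a b x y : PermPt} (h : pdsP a x = pdsP b y) (hs : a.1 = b.1) :
    a = b ∧ x = y := by
  have hv : ∀ i, vf (pdsP a x) i = vf (pdsP b y) i := by rw [h]; simp
  have hsz : (pdsP a x).1 = (pdsP b y).1 := by rw [h]
  simp only [pdsP_fst] at hsz
  constructor
  · refine vf_ext hs (fun i hi => ?_)
    have := hv i
    rwa [vf_pdsP, vf_pdsP, if_pos hi, if_pos (by omega)] at this
  · refine vf_ext (by omega) (fun i hi => ?_)
    have := hv (a.1 + i)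
    rw [vf_pdsP, vf_pdsP, if_neg (by omega), if_neg (by omega), ← hs] at this
    simpa using this

lemma wsum_injective : Function.Injective wsum := by
  intro u
  induction u with
  | nil =>
    intro v h
    cases v with
    | nil => rfl
    | cons b v =>
      have := congrArg Sigma.fst h
      have h2 := b.2.1
      simp only [wsum_nil, wsum_cons, pdsP_fst, pempty_fst] at this
      omega
  | cons a u ih =>
    intro v h
    cases v with
    | nil =>
      have := congrArg Sigma.fst h
      have h2 := a.2.1
      simp only [wsum_nil, wsum_cons, pdsP_fst, pempty_fst] at this
      omega
    | cons b v =>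
      rw [wsum_cons, wsum_cons] at h
      obtain ⟨h1, h2⟩ := pdsP_cancel h (le_antisymm (pdsP_size_le h.symm) (pdsP_size_le h))
      rw [ih h2, Subtype.ext h1]

lemma wsum_surjective : Function.Surjective wsum := by
  intro x
  induction hn : x.1 using Nat.strong_induction_on generalizing x with
  | _ n ih =>
    by_cases h0 : x.1 = 0
    · exact ⟨[], (eq_pempty h0).symm⟩
    by_cases hd : Decomp x.2
    · obtain ⟨m, hm0, hm, h⟩ := (decomp_iff x).1 hd
      obtain ⟨a, b, ha, rfl⟩ := split_at x m hm.le h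
      simp only [pdsP_fst] at *
      obtain ⟨u, hu⟩ := ih a.1 (by omega) a rfl
      obtain ⟨v, hv⟩ := ih b.1 (by omega) b rfl
      exact ⟨u ++ v, by rw [wsum_append, hu, hv]⟩
    · exact ⟨[⟨x, by omega, hd⟩], wsum_single _⟩

def wle (u v : List Ind) : Prop := ple (wsum u) (wsum v)

lemma wle_cons_iff (w : List Ind) (b : Ind) (t : List Ind) :
    wle w (b :: t) ↔ ∃ u v, w = u ++ v ∧ wle u [b] ∧ wle v t := by
  constructor
  · intro h
    unfold wle at h
    rw [wsum_cons] at h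
    obtain ⟨x, y, hxy, h1, h2⟩ := ple_pdsP_split h
    obtain ⟨u, rfl⟩ := wsum_surjective x
    obtain ⟨v, rfl⟩ := wsum_surjective y
    rw [← wsum_append] at hxy
    refine ⟨u, v, wsum_injective hxy, ?_, h2⟩
    unfold wle; rwa [wsum_single]
  · rintro ⟨u, v, rfl, h1, h2⟩
    unfold wle at *
    rw [wsum_append, wsum_cons]
    rw [wsum_single] at h1
    exact ple_pdsP h1 h2

lemma wle_refl (u : List Ind) : wle u u := ple_refl _
lemma wle_trans {u v w : List Ind} (h : wle u v) (h' : wle v w) : wle u w := ple_trans h h'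

lemma wle_append (u v w : List Ind) : wle v (u ++ v ++ w) := by
  unfold wle
  rw [wsum_append, wsum_append]
  have h1 := ple_pdsP (pempty_ple (wsum u)) (ple_refl (wsum v))
  have h2 := ple_pdsP h1 (pempty_ple (wsum w))
  rwa [pdsP_pempty, pempty_pdsP] at h2

lemma wle_initial (v w : List Ind) : wle v (v ++ w) := by simpa using wle_append [] v w
lemma wle_suffix (u v : List Ind) : wle v (u ++ v) := by simpa using wle_append u v []

lemma finite_ple (z : PermPt) : {y | ple y z}.Finite := by
  refine ((Finset.range (z.1 + 1)).sigma
    (fun n => (Finset.univ : Finset (Equiv.Perm (Fin n))))).finite_toSet.subset ?_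
  intro y hy
  have := ple_size hy
  simp; omega

lemma finite_wle (z : List Ind) : {y | wle y z}.Finite :=
  (finite_ple (wsum z)).preimage wsum_injective.injOn

noncomputable def down (z : List Ind) : Finset (List Ind) := (finite_wle z).toFinset

lemma mem_down {y z : List Ind} : y ∈ down z ↔ wle y z := by simp [down]

/-! ### The recursive candidate for the Möbius series, in an arbitrary ring -/

section Ring

variable {R : Type*} [Ring R]

noncomputable def jn (a : Ind) (l : List Ind) : R := if l.head? = some a then 1 else 0

noncomputable def NN (m : Ind → R) : List Ind → R
  | [] => 1
  | a :: r => (m a + jn a r) * NN m r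

noncomputable def QQ (m : Ind → R) (c : Ind) : List Ind → R
  | [] => 1
  | a :: r => (m a + jn a (r ++ [c])) * QQ m c r

lemma jn_append (a c : Ind) (u v : List Ind) :
    (jn a (u ++ c :: v) : R) = jn a (u ++ [c]) := by
  cases u <;> simp [jn]

lemma NN_append (m : Ind → R) (c : Ind) (u v : List Ind) :
    NN m (u ++ c :: v) = QQ m c u * NN m (c :: v) := by
  induction u with
  | nil => simp [QQ]
  | cons a u ih =>
    rw [List.cons_append, NN, QQ, ih, jn_append, mul_assoc]

lemma QQ_append (m : Ind → R) (c d : Ind) (u v : List Ind) :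
    QQ m c (u ++ d :: v) = QQ m d u * QQ m c (d :: v) := by
  induction u with
  | nil => simp [QQ]
  | cons a u ih =>
    rw [List.cons_append, QQ, QQ, ih, List.append_assoc, List.cons_append, jn_append, mul_assoc]

lemma QQ_snoc (m : Ind → R) (c d : Ind) (u : List Ind) :
    QQ m c (u ++ [d]) = NN m (u ++ [d]) + if d = c then QQ m c u else 0 := by
  rw [QQ_append, NN_append]
  by_cases h : d = c
  · subst h
    simp [QQ, NN, jn, mul_add]
  · simp [QQ, NN, jn, h, Ne.symm h]

lemma sum_QQ (m : Ind → R) (c : Ind) (D : Finset (List Ind))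
    (hD : ∀ u a, u ++ [a] ∈ D → u ∈ D) :
    ∑ u ∈ D with u ++ [c] ∉ D, QQ m c u = ∑ u ∈ D, NN m u := by
  have h1 : ∑ u ∈ D, QQ m c u =
      ∑ u ∈ D, NN m u + ∑ u ∈ D with u ++ [c] ∈ D, QQ m c u := by
    have h2 : ∑ u ∈ D with u ++ [c] ∈ D, QQ m c u
        = ∑ u ∈ D, (QQ m c u - NN m u) := by
      have h3 : ∑ u ∈ D with u ++ [c] ∈ D, QQ m c u
        = ∑ u ∈ (D.filter (fun u => u ++ [c] ∈ D)).image (fun u => u ++ [c]),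
            (QQ m c u - NN m u) := by
        rw [Finset.sum_image (by intro x _ y _ h; simpa using h)]
        refine Finset.sum_congr rfl (fun u _ => ?_)
        rw [QQ_snoc]; simp
      rw [h3]
      refine Finset.sum_subset ?_ ?_
      · intro w hw
        simp only [Finset.mem_image, Finset.mem_filter] at hw
        obtain ⟨u, ⟨-, h⟩, rfl⟩ := hw
        exact h
      · intro w hw hnot
        rcases List.eq_nil_or_concat w with rfl | ⟨u, d, rfl⟩
        · simp [QQ, NN]
        · rw [List.concat_eq_append] at hw hnot ⊢
          rw [QQ_snoc]
          by_cases hdc : d = c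
          · subst hdc
            exact absurd (Finset.mem_image.2 ⟨u, by simp [hw, hD u d hw], rfl⟩) hnot
          · simp [hdc]
    rw [h2, ← Finset.sum_add_distrib]
    simp
  have h4 := Finset.sum_filter_add_sum_filter_not D (fun u => u ++ [c] ∈ D) (QQ m c)
  rw [h1, add_comm] at h4
  exact add_right_cancel h4

/-- `u` cannot be extended inside `D` by the first letter of `v`. -/
def Greedy (D : Finset (List Ind)) (u v : List Ind) : Prop :=
  ∀ c, v.head? = some c → u ++ [c] ∉ D

lemma initial_mem_down {u v : List Ind} {z : List Ind} (h : u ++ v ∈ down z) : u ∈ down z :=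
  mem_down.2 (wle_trans (wle_initial u v) (mem_down.1 h))

lemma greedy_unique_aux {z u v r v' : List Ind} (hu' : u ++ r ∈ down z)
    (hv : v = r ++ v') (hg : Greedy (down z) u v) : r = [] := by
  cases r with
  | nil => rfl
  | cons c r =>
    exfalso
    refine hg c (by simp [hv]) (initial_mem_down (v := r) ?_)
    simpa using hu'

lemma greedy_unique {z u v u' v' : List Ind} (hu : u ∈ down z) (hu' : u' ∈ down z)
    (h : u ++ v = u' ++ v') (hg : Greedy (down z) u v) (hg' : Greedy (down z) u' v') :
    u = u' ∧ v = v' := by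
  rcases List.append_eq_append_iff.1 h with ⟨r, h1, h2⟩ | ⟨r, h1, h2⟩
  · have := greedy_unique_aux (h1 ▸ hu') h2 hg
    subst this
    simp_all
  · have := greedy_unique_aux (h1 ▸ hu) h2 hg'
    subst this
    simp_all

lemma greedy_exists {z t : List Ind} (v : List Ind) : ∀ u, u ∈ down z → v ∈ down t →
    ∃ u' v', u ++ v = u' ++ v' ∧ u' ∈ down z ∧ v' ∈ down t ∧ Greedy (down z) u' v' := by
  induction v with
  | nil => intro u hu hv; exact ⟨u, [], rfl, hu, hv, by simp [Greedy]⟩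
  | cons c v ih =>
    intro u hu hv
    by_cases h : u ++ [c] ∈ down z
    · have hv' : v ∈ down t := mem_down.2 (wle_trans (wle_suffix [c] v) (mem_down.1 hv))
      obtain ⟨u', v', h1, h2⟩ := ih _ h hv'
      exact ⟨u', v', by simpa using h1, h2⟩
    · exact ⟨u, c :: v, rfl, hu, hv, by simpa [Greedy] using h⟩

lemma sum_down_cons (b : Ind) (t : List Ind) (F : List Ind → R) :
    ∑ w ∈ down (b :: t), F w =
      ∑ v ∈ down t, ∑ u ∈ down [b] with Greedy (down [b]) u v, F (u ++ v) := by
  rw [Finset.sum_sigma']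
  symm
  refine Finset.sum_bij (fun p _ => p.2 ++ p.1) ?_ ?_ ?_ ?_
  · rintro ⟨v, u⟩ h
    simp only [Finset.mem_sigma, Finset.mem_filter] at h
    rw [mem_down, wle_cons_iff]
    exact ⟨u, v, rfl, mem_down.1 h.2.1, mem_down.1 h.1⟩
  · rintro ⟨v, u⟩ h ⟨v', u'⟩ h' he
    simp only [Finset.mem_sigma, Finset.mem_filter] at h h' he
    obtain ⟨rfl, rfl⟩ := greedy_unique h.2.1 h'.2.1 he h.2.2 h'.2.2
    rfl
  · intro w hw
    rw [mem_down, wle_cons_iff] at hw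
    obtain ⟨u, v, rfl, h1, h2⟩ := hw
    obtain ⟨u', v', h3, h4, h5, h6⟩ := greedy_exists v u (mem_down.2 h1) (mem_down.2 h2)
    exact ⟨⟨v', u'⟩, by simp [h4, h5, h6], h3.symm⟩
  · intro p _; rfl

lemma sum_NN_cons (m : Ind → R) (b : Ind) (t : List Ind) :
    ∑ w ∈ down (b :: t), NN m w = (∑ u ∈ down [b], NN m u) * ∑ v ∈ down t, NN m v := by
  rw [sum_down_cons, Finset.mul_sum]
  refine Finset.sum_congr rfl (fun v _ => ?_)
  cases v with
  | nil =>
    rw [Finset.filter_true_of_mem (by simp [Greedy])]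
    simp [NN]
  | cons c v =>
    rw [← sum_QQ m c (down [b]) (fun u a h => initial_mem_down h), Finset.sum_mul]
    refine Finset.sum_congr (by simp [Greedy]) (fun u _ => NN_append _ _ _ _)

lemma down_nil : down [] = {[]} := by
  ext w
  rw [mem_down, Finset.mem_singleton]
  constructor
  · intro h
    apply wsum_injective
    exact ple_antisymm h (pempty_ple _)
  · rintro rfl; exact wle_refl _

lemma wsum_lt {w z : List Ind} (h : wle w z) (hne : w ≠ z) : (wsum w).1 < (wsum z).1 := by
  by_contra hcon
  exact hne (wsum_injective (ple_eq h (by omega)))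

lemma eq_NN (M X : List Ind → R) (hX0 : X [] = 1) (hX : ∀ b t, X (b :: t) = X [b] * X t)
    (hM : ∀ z, ∑ w ∈ down z, M w = X z) (z : List Ind) :
    M z = NN (fun a => M [a]) z := by
  induction hn : (wsum z).1 using Nat.strong_induction_on generalizing z with
  | _ n ih =>
    have ih' : ∀ w, wle w z → w ≠ z → M w = NN (fun a => M [a]) w := fun w h1 h2 =>
      ih _ (hn ▸ wsum_lt h1 h2) w rfl
    match z, hn, ih' with
    | [], _, _ =>
      have := hM []
      rw [down_nil, Finset.sum_singleton, hX0] at this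
      simp [this, NN]
    | [a], _, _ => simp [NN, jn]
    | b :: c :: t, _, ih' =>
      have hb : wle [b] (b :: c :: t) := wle_initial [b] (c :: t)
      have ht : wle (c :: t) (b :: c :: t) := wle_suffix [b] (c :: t)
      have key : ∀ y, wle y (b :: c :: t) → y ≠ b :: c :: t →
          ∑ w ∈ down y, NN (fun a => M [a]) w = X y := by
        intro y hy hne
        rw [← hM y]
        refine Finset.sum_congr rfl (fun w hw => ?_)
        have hwy := mem_down.1 hw
        refine (ih' w (wle_trans hwy hy) ?_).symm
        rintro rfl
        exact hne (wsum_injective (ple_antisymm hy hwy))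
      have h1 := sum_NN_cons (fun a => M [a]) b (c :: t)
      rw [key _ hb (by simp), key _ ht (by simp), ← hX, ← hM] at h1
      have hmem : b :: c :: t ∈ down (b :: c :: t) := mem_down.2 (wle_refl _)
      rw [← Finset.add_sum_erase _ _ hmem, ← Finset.add_sum_erase _ _ hmem] at h1
      have h2 : ∑ x ∈ (down (b :: c :: t)).erase (b :: c :: t), NN (fun a => M [a]) x
          = ∑ x ∈ (down (b :: c :: t)).erase (b :: c :: t), M x := by
        refine Finset.sum_congr rfl (fun w hw => ?_)
        rw [Finset.mem_erase] at hw
        exact (ih' w (mem_down.1 hw.2) hw.1).symm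
      rw [h2] at h1
      exact (add_right_cancel h1).symm

end Ring

/-! ### Application to the Möbius function -/

section Mob

variable (mu : PermPt → PermPt → ℤ)

abbrev Alg := MonoidAlgebra ℤ (FreeMonoid Ind)

noncomputable def wmu (u v : List Ind) : ℤ := mu (wsum u) (wsum v)

noncomputable def MM (z : List Ind) : Alg :=
  ∑ w ∈ down z, MonoidAlgebra.single (FreeMonoid.ofList w) (wmu mu w z)

noncomputable def XX (z : List Ind) : Alg := MonoidAlgebra.single (FreeMonoid.ofList z) 1

variable {mu}

lemma coeff_MM (hmu : IsMobius mu) (w z : List Ind) :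
    (MM mu z).coeff (FreeMonoid.ofList w) = wmu mu w z := by
  unfold MM
  rw [MonoidAlgebra.coeff_sum, Finsupp.finsetSum_apply]
  simp only [MonoidAlgebra.coeff_single, Finsupp.single_apply, EmbeddingLike.apply_eq_iff_eq]
  rw [Finset.sum_ite_eq']
  split_ifs with h
  · rfl
  · exact (hmu.2.1 _ _ (fun h' => h (mem_down.2 h'))).symm

lemma sum_mu (hmu : IsMobius mu) (x z : PermPt) :
    ∑ y ∈ (finite_ple z).toFinset, mu x y = if x = z then 1 else 0 := by
  by_cases hxz : ple x z
  · by_cases he : x = z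
    · subst he
      rw [if_pos rfl, Finset.sum_eq_single x]
      · exact hmu.1 x
      · intro y hy hne
        apply hmu.2.1
        intro hxy
        exact hne (ple_antisymm (by simpa using hy) hxy)
      · intro h; exact absurd (by simp [ple_refl]) h
    · rw [if_neg he, ← hmu.2.2 x z hxz he]
      have hfin : {y : PermPt | ple x y ∧ ple y z}.Finite :=
        (finite_ple z).subset (fun y hy => hy.2)
      rw [finsum_mem_eq_finite_toFinset_sum _ hfin]
      symm
      refine Finset.sum_subset ?_ ?_
      · intro y hy
        simp only [Set.Finite.mem_toFinset, Set.mem_ofPred_eq] at hy ⊢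
        exact hy.2
      · intro y hy hnot
        simp only [Set.Finite.mem_toFinset, Set.mem_ofPred_eq] at hy hnot
        exact hmu.2.1 _ _ (fun h => hnot ⟨h, hy⟩)
  · have he : x ≠ z := by rintro rfl; exact hxz (ple_refl _)
    rw [if_neg he]
    refine Finset.sum_eq_zero (fun y hy => hmu.2.1 _ _ (fun h => hxz (ple_trans h ?_)))
    simpa using hy

lemma sum_wmu (hmu : IsMobius mu) (x z : List Ind) :
    ∑ y ∈ down z, wmu mu x y = if x = z then 1 else 0 := by
  have h := sum_mu hmu (wsum x) (wsum z)
  simp only [wsum_injective.eq_iff] at h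
  rw [← h]
  refine Finset.sum_bij (fun w _ => wsum w) ?_ ?_ ?_ ?_
  · intro w hw; simpa [wle] using mem_down.1 hw
  · intro a _ b _ h; exact wsum_injective h
  · intro y hy
    obtain ⟨w, rfl⟩ := wsum_surjective y
    exact ⟨w, mem_down.2 (by simpa [wle] using hy), rfl⟩
  · intro w _; rfl

lemma sum_MM (hmu : IsMobius mu) (z : List Ind) : ∑ w ∈ down z, MM mu w = XX z := by
  ext x
  obtain ⟨x, rfl⟩ := FreeMonoid.ofList.surjective x
  rw [MonoidAlgebra.coeff_sum, Finsupp.finsetSum_apply]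
  simp only [coeff_MM hmu]
  rw [sum_wmu hmu, XX, MonoidAlgebra.coeff_single, Finsupp.single_apply]
  simp only [EmbeddingLike.apply_eq_iff_eq, eq_comm]

lemma MM_cons (hmu : IsMobius mu) (a : Ind) (r : List Ind) :
    MM mu (a :: r) = MM mu [a] * MM mu r + if r.head? = some a then MM mu r else 0 := by
  have h := eq_NN (MM mu) XX (by rfl) (by
    intro b t
    simp only [XX, MonoidAlgebra.single_mul_single, mul_one]
    rfl) (sum_MM hmu)
  rw [h (a :: r), h r, NN, add_mul, jn]
  split_ifs <;> simp

lemma coeff_mul_split (f g : Alg) (x : List Ind) :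
    (f * g).coeff (FreeMonoid.ofList x) = ∑ i ∈ Finset.range (x.length + 1),
      f.coeff (FreeMonoid.ofList (x.take i)) * g.coeff (FreeMonoid.ofList (x.drop i)) := by
  rw [MonoidAlgebra.coeff_mul_antidiag f g (FreeMonoid.ofList x)
    ((Finset.range (x.length + 1)).image
      (fun i => (FreeMonoid.ofList (x.take i), FreeMonoid.ofList (x.drop i))))]
  · rw [Finset.sum_image]
    intro i hi j hj h
    simp only [Finset.coe_range, Set.mem_Iio] at hi hj
    have := congrArg (fun p => (FreeMonoid.toList p.1).length) h
    simp at this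
    omega
  · rintro ⟨p, q⟩
    obtain ⟨p, rfl⟩ := FreeMonoid.ofList.surjective p
    obtain ⟨q, rfl⟩ := FreeMonoid.ofList.surjective q
    simp only [Finset.mem_image, Finset.mem_range, Prod.mk.injEq, EmbeddingLike.apply_eq_iff_eq]
    rw [← FreeMonoid.ofList_append, EmbeddingLike.apply_eq_iff_eq]
    constructor
    · rintro ⟨i, _, rfl, rfl⟩; simp
    · rintro rfl; exact ⟨p.length, by simp, by simp, by simp⟩

lemma wmu_cons (hmu : IsMobius mu) (x : List Ind) (a : Ind) (r : List Ind) :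
    wmu mu x (a :: r) = (∑ i ∈ Finset.range (x.length + 1),
      wmu mu (x.take i) [a] * wmu mu (x.drop i) r) +
      if r.head? = some a then wmu mu x r else 0 := by
  have h := congrArg (fun f : Alg => f.coeff (FreeMonoid.ofList x)) (MM_cons hmu a r)
  simp only [MonoidAlgebra.coeff_add, Finsupp.add_apply, coeff_mul_split, coeff_MM hmu] at h
  rw [h]
  split_ifs
  · rw [coeff_MM hmu]
  · simp

lemma wmu_blocks (hmu : IsMobius mu) (x : List Ind) (a : Ind) (k : ℕ) : ∀ l : List Ind,
    1 ≤ k → (∀ i < k, l[i]? = some a) → l[k]? ≠ some a →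
    wmu mu x l = ∑ j ∈ Finset.Icc 1 k, ∑ i ∈ Finset.range (x.length + 1),
      wmu mu (x.take i) [a] * wmu mu (x.drop i) (l.drop j) := by
  induction k with
  | zero => intro l h; omega
  | succ k ih =>
    intro l _ h1 h2
    cases l with
    | nil => have := h1 0 (by omega); simp at this
    | cons b r =>
      obtain rfl : b = a := by simpa using h1 0 (by omega)
      rw [wmu_cons hmu]
      rw [← Finset.add_sum_Ioc_eq_sum_Icc (by omega)]
      congr 1
      rcases Nat.eq_zero_or_pos k with rfl | hk
      · have : r.head? ≠ some b := by
          rw [List.head?_eq_getElem?]; simpa using h2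
        simp [this]
      · have : r.head? = some b := by
          rw [List.head?_eq_getElem?]; simpa using h1 1 (by omega)
        rw [if_pos this, ih r hk (fun i hi => by simpa using h1 (i + 1) (by omega))
          (by simpa using h2)]
        have himg : Finset.Ioc 1 (k + 1) = (Finset.Icc 1 k).map (addRightEmbedding 1) := by
          ext j; simp; omega
        rw [himg, Finset.sum_map]
        simp

lemma mu_pempty (hmu : IsMobius mu) (x : PermPt) (hx : 2 ≤ x.1) : mu pempty x = 0 := by
  have hone : mu pempty pone = -1 := by
    have h := sum_mu hmu pempty pone
    have hset : (finite_ple pone).toFinset = {pempty, pone} := by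
      ext y
      simp only [Set.Finite.mem_toFinset, Set.mem_ofPred_eq, Finset.mem_insert,
        Finset.mem_singleton]
      constructor
      · intro hy
        have := ple_size hy
        change y.1 ≤ 1 at this
        rcases Nat.le_one_iff_eq_zero_or_eq_one.1 this with h | h
        · exact Or.inl (eq_pempty h)
        · exact Or.inr (eq_pone h)
      · rintro (rfl | rfl)
        · exact pempty_ple _
        · exact ple_refl _
    have hne : pempty ≠ pone := by
      intro h
      have := congrArg Sigma.fst h
      change 0 = 1 at this
      omega
    rw [hset, Finset.sum_pair hne, if_neg hne, hmu.1] at h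
    omega
  induction hn : x.1 using Nat.strong_induction_on generalizing x with
  | _ n ih =>
    have hne : pempty ≠ pone := by
      intro h
      have := congrArg Sigma.fst h
      change 0 = 1 at this
      omega
    have hx0 : pempty ≠ x := by
      intro h
      have := congrArg Sigma.fst h
      change 0 = _ at this
      omega
    have hx1 : pone ≠ x := by
      intro h
      have := congrArg Sigma.fst h
      change 1 = _ at this
      omega
    have h := sum_mu hmu pempty x
    rw [if_neg hx0] at h
    have hsub : ∑ y ∈ ({pempty, pone, x} : Finset PermPt), mu pempty y
        = ∑ y ∈ (finite_ple x).toFinset, mu pempty y := by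
      refine Finset.sum_subset ?_ ?_
      · intro y hy
        simp only [Finset.mem_insert, Finset.mem_singleton] at hy
        simp only [Set.Finite.mem_toFinset, Set.mem_ofPred_eq]
        rcases hy with rfl | rfl | rfl
        · exact pempty_ple _
        · exact pone_ple (by omega)
        · exact ple_refl _
      · intro y hy hnot
        simp only [Finset.mem_insert, Finset.mem_singleton, not_or] at hnot
        simp only [Set.Finite.mem_toFinset, Set.mem_ofPred_eq] at hy
        have h0 : y.1 ≠ 0 := fun h => hnot.1 (eq_pempty h)
        have h1 : y.1 ≠ 1 := fun h => hnot.2.1 (eq_pone h)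
        have h2 : y.1 < x.1 := by
          by_contra hcon
          exact hnot.2.2 (ple_eq hy (by omega))
        exact ih y.1 (by omega) y (by omega) rfl
    rw [← hsub, Finset.sum_insert (by simp [hne, hx0]), Finset.sum_pair hx1, hmu.1, hone] at h
    omega

end Mob

end PatMob

/-- Proposition 2 of Burstein–Jelínek–Jelínková–Steingrímsson: if the finest
decomposition of `τ` has `t ≥ 2` components with `|τ₁| > 1`, and `k` is the
number of leading components equal to `τ₁`, then
`μ(σ,τ) = Σ_{i=1}^{s} Σ_{j=1}^{k} μ(σ_{≤i}, τ₁) · μ(σ_{>i}, τ_{>j})`. -/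
theorem mobius_tau_first_long (mu : PermPt → PermPt → ℤ) (hmu : IsMobius mu)
    (s t : ℕ) (hs : 1 ≤ s) (ht : 2 ≤ t)
    (σf : Fin s → PermPt) (τf : Fin t → PermPt)
    (hσcomp : ∀ m : Fin s, 0 < (σf m).1 ∧ ¬ Decomp (σf m).2)
    (hτcomp : ∀ m : Fin t, 0 < (τf m).1 ∧ ¬ Decomp (τf m).2)
    (σ τ : PermPt)
    (hσ : σ = psum (List.ofFn σf)) (hτ : τ = psum (List.ofFn τf))
    (hτ1 : 1 < (τf ⟨0, by omega⟩).1)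
    (k : ℕ) (hk1 : 1 ≤ k) (hk2 : k ≤ t)
    (hk3 : ∀ i : Fin t, (i : ℕ) < k → τf i = τf ⟨0, by omega⟩)
    (hk4 : ∀ h : k < t, τf ⟨k, h⟩ ≠ τf ⟨0, by omega⟩) :
    mu σ τ =
      ∑ i ∈ Finset.Icc 1 s, ∑ j ∈ Finset.Icc 1 k,
        mu (psum ((List.ofFn σf).take i)) (τf ⟨0, by omega⟩) *
          mu (psum ((List.ofFn σf).drop i)) (psum ((List.ofFn τf).drop j)) := by
  subst hσ hτ
  let x : List PatMob.Ind := List.ofFn (fun m => (⟨σf m, hσcomp m⟩ : PatMob.Ind))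
  let l : List PatMob.Ind := List.ofFn (fun m => (⟨τf m, hτcomp m⟩ : PatMob.Ind))
  let a : PatMob.Ind := ⟨τf ⟨0, by omega⟩, hτcomp _⟩
  have hx : List.ofFn σf = x.map Subtype.val := by
    simp only [x, List.map_ofFn]; rfl
  have hl : List.ofFn τf = l.map Subtype.val := by
    simp only [l, List.map_ofFn]; rfl
  have hxlen : x.length = s := by simp [x]
  have hget : ∀ i (h : i < t), l[i]? = some ⟨τf ⟨i, h⟩, hτcomp _⟩ := by
    intro i h
    simp [l, List.getElem?_ofFn, h]
  have main := PatMob.wmu_blocks hmu x a k l hk1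
    (by
      intro i hi
      rw [hget i (by omega)]
      exact congrArg some (Subtype.ext (hk3 ⟨i, by omega⟩ hi)))
    (by
      by_cases h : k < t
      · rw [hget k h]
        intro he
        exact hk4 h (congrArg Subtype.val (Option.some.inj he))
      · rw [List.getElem?_eq_none (by simp [l]; omega)]
        simp)
  rw [hx, hl]
  change PatMob.wmu mu x l = _
  rw [main, Finset.sum_comm, hxlen]
  rw [← Finset.sum_subset (s₁ := Finset.Icc 1 s)]
  · refine Finset.sum_congr rfl (fun i _ => Finset.sum_congr rfl (fun j _ => ?_))
    simp only [PatMob.wmu, PatMob.wsum_single, PatMob.wsum, List.map_take, List.map_drop]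
    rw [List.map_singleton, PatMob.psum_single]
  · intro i hi
    simp only [Finset.mem_Icc, Finset.mem_range] at hi ⊢
    omega
  · intro i hi hni
    simp only [Finset.mem_Icc, Finset.mem_range] at hi hni
    obtain rfl : i = 0 := by omega
    refine Finset.sum_eq_zero (fun j _ => ?_)
    have h0 : PatMob.wmu mu (x.take 0) [a] = 0 := by
      unfold PatMob.wmu
      rw [PatMob.wsum_single, List.take_zero, PatMob.wsum_nil]
      exact PatMob.mu_pempty hmu _ hτ1
    rw [h0, zero_mul]
end

section
/- Let σ and τ be separable permutations with |τ| − |σ| ≥ 3. Suppose τ has a contiguous subword of contiguous letters that, after flattening, equals π ⊕ π with π indecomposable (or π ⊖ π with π skew indecomposable), and σ is obtained from τ by removing one of these copies of π (and flattening). Then the open interval (σ,τ) in the pattern poset is disconnected. -/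
open scoped Classical

/-- A permutation is skew decomposable if it is the skew sum of two nonempty
permutations. -/
def SkewDecomp {n : ℕ} (σ : Equiv.Perm (Fin n)) : Prop :=
  ∃ m : ℕ, 0 < m ∧ m < n ∧ ∀ i : Fin n, (i : ℕ) < m → n - m ≤ (σ i : ℕ)

/-- Separable permutations: built from the singleton permutation by direct
sums and skew sums (equivalently, avoiding 2413 and 3142). -/
inductive Separable : PermPt → Prop
  | one : Separable pone
  | ds (a b : PermPt) : Separable a → Separable b → Separable (pdsP a b)
  | ss (a b : PermPt) : Separable a → Separable b → Separable (pssP a b)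

namespace SDB

/-- Value of a permutation at a natural-number position (junk value `0` outside). -/
def ev (T : PermPt) (i : ℕ) : ℕ := if h : i < T.1 then (T.2 ⟨i, h⟩ : ℕ) else 0

theorem ev_of_lt {T : PermPt} {i : ℕ} (h : i < T.1) : ev T i = (T.2 ⟨i, h⟩ : ℕ) := by
  simp [ev, h]

theorem ev_fin (T : PermPt) (i : Fin T.1) : ev T i = (T.2 i : ℕ) := by
  simp [ev]

theorem ev_lt {T : PermPt} {i : ℕ} (h : i < T.1) : ev T i < T.1 := by
  rw [ev_of_lt h]; exact (T.2 ⟨i, h⟩).2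

theorem ev_inj {T : PermPt} {i j : ℕ} (hi : i < T.1) (hj : j < T.1) (h : ev T i = ev T j) :
    i = j := by
  rw [ev_of_lt hi, ev_of_lt hj] at h
  have := T.2.injective (Fin.ext h)
  simpa using this

theorem ev_surj {T : PermPt} {k : ℕ} (hk : k < T.1) : ∃ i < T.1, ev T i = k := by
  refine ⟨T.2.symm ⟨k, hk⟩, (T.2.symm ⟨k, hk⟩).2, ?_⟩
  rw [ev_fin]; simp

theorem ext_ord {S T : PermPt} (hl : S.1 = T.1)
    (h : ∀ i < S.1, ∀ j < S.1, (ev S i ≤ ev S j ↔ ev T i ≤ ev T j)) : S = T := by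
  obtain ⟨n, s⟩ := S
  obtain ⟨n', t⟩ := T
  obtain rfl : n = n' := hl
  have h' : ∀ i j : Fin n, s i ≤ s j ↔ t i ≤ t j := by
    intro i j
    have := h i i.2 j j.2
    rw [ev_fin ⟨n, s⟩ i, ev_fin ⟨n, s⟩ j, ev_fin ⟨n, t⟩ i, ev_fin ⟨n, t⟩ j] at this
    exact this
  let e : Fin n ≃o Fin n := ⟨s.symm.trans t, by
    intro x y
    have := h' (s.symm x) (s.symm y)
    simpa using this.symm⟩
  have he : e = OrderIso.refl _ := Subsingleton.elim _ _
  have : s = t := by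
    ext i
    have h1 : e (s i) = s i := by rw [he]; rfl
    have h2 : e (s i) = t i := by simp [e]
    rw [← h1, h2]
  rw [this]

theorem ext_ev {S T : PermPt} (hl : S.1 = T.1) (h : ∀ i < S.1, ev S i = ev T i) : S = T := by
  apply ext_ord hl
  intro i hi j hj
  rw [h i hi, h j hj]

theorem std (n : ℕ) (g : ℕ → ℕ) (hg : ∀ i < n, ∀ j < n, g i = g j → i = j) :
    ∃ T : PermPt, T.1 = n ∧ ∀ i < n, ∀ j < n, (ev T i ≤ ev T j ↔ g i ≤ g j) := by
  let s : Finset ℕ := Finset.univ.image (fun i : Fin n => g i)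
  have hinj : Function.Injective (fun i : Fin n => g i) := fun i j h =>
    Fin.ext (hg i i.2 j j.2 h)
  have hs : s.card = n := by
    rw [Finset.card_image_of_injective _ hinj]; simp
  let o := s.orderIsoOfFin hs
  let φ : Fin n → Fin n := fun i => o.symm ⟨g i, Finset.mem_image_of_mem _ (Finset.mem_univ i)⟩
  have hφ : Function.Injective φ := by
    intro i j h
    have := o.symm.injective h
    simp only [Subtype.mk.injEq] at this
    exact hinj this
  let p : Equiv.Perm (Fin n) := Equiv.ofBijective φ (Finite.injective_iff_bijective.1 hφ)
  refine ⟨⟨n, p⟩, rfl, ?_⟩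
  intro i hi j hj
  rw [ev_of_lt (T := ⟨n, p⟩) hi, ev_of_lt (T := ⟨n, p⟩) hj, Fin.val_fin_le]
  change φ _ ≤ φ _ ↔ _
  simp [φ]

theorem ple_iff {S T : PermPt} : ple S T ↔ ∃ f : ℕ → ℕ, (∀ i < S.1, f i < T.1) ∧
    (∀ i j, i < j → j < S.1 → f i < f j) ∧
    ∀ i < S.1, ∀ j < S.1, (ev S i ≤ ev S j ↔ ev T (f i) ≤ ev T (f j)) := by
  constructor
  · rintro ⟨f, hf, h⟩
    refine ⟨fun i => if h : i < S.1 then f ⟨i, h⟩ else 0, ?_, ?_, ?_⟩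
    · intro i hi; simp [hi]
    · intro i j hij hj
      have hi := hij.trans hj
      simp only [hi, hj, dite_true]
      exact hf hij
    · intro i hi j hj
      simp only [hi, hj, dite_true, ev_fin]
      rw [ev_of_lt hi, ev_of_lt hj]
      exact h _ _
  · rintro ⟨f, h1, h2, h3⟩
    refine ⟨fun i => ⟨f i, h1 i i.2⟩, fun i j hij => h2 i j hij j.2, ?_⟩
    intro i j
    have := h3 i i.2 j j.2
    rw [ev_fin, ev_fin, ev_of_lt (h1 i i.2), ev_of_lt (h1 j j.2)] at this
    exact this

theorem ple_refl (S : PermPt) : ple S S := ⟨id, strictMono_id, fun _ _ => Iff.rfl⟩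

theorem ple_trans {S T U : PermPt} (h : ple S T) (h' : ple T U) : ple S U := by
  obtain ⟨f, hf, h⟩ := h
  obtain ⟨g, hg, h'⟩ := h'
  exact ⟨g ∘ f, hg.comp hf, fun a b => (h a b).trans (h' _ _)⟩

theorem ple_len {S T : PermPt} (h : ple S T) : S.1 ≤ T.1 := by
  obtain ⟨f, hf, h⟩ := h
  simpa using Fintype.card_le_of_injective f hf.injective

theorem mono_nat {n : ℕ} {f : ℕ → ℕ} (h2 : ∀ i j, i < j → j < n → f i < f j) (i d : ℕ)
    (hd : i + d < n) : f i + d ≤ f (i + d) := by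
  induction d with
  | zero => simp
  | succ d ih =>
    have := ih (by omega)
    have := h2 (i + d) (i + (d + 1)) (by omega) hd
    omega

theorem ple_eq {S T : PermPt} (h : ple S T) (hl : T.1 ≤ S.1) : S = T := by
  have hl' := ple_len h
  have hl : S.1 = T.1 := by omega
  obtain ⟨f, h1, h2, h3⟩ := ple_iff.1 h
  have hf : ∀ i < S.1, f i = i := by
    intro i hi
    have a := mono_nat h2 0 i (by omega)
    have b := mono_nat h2 i (S.1 - 1 - i) (by omega)
    have c := h1 (i + (S.1 - 1 - i)) (by omega)
    rw [Nat.zero_add] at a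
    omega
  apply ext_ord hl
  intro i hi j hj
  rw [h3 i hi j hj, hf i hi, hf j hj]

theorem plt_iff {S T : PermPt} : plt S T ↔ ple S T ∧ S.1 < T.1 := by
  constructor
  · rintro ⟨h, h'⟩
    refine ⟨h, ?_⟩
    by_contra hc
    have := ple_eq h (by omega)
    subst this
    exact h' (ple_refl _)
  · rintro ⟨h, h'⟩
    exact ⟨h, fun hc => by have := ple_len hc; omega⟩

theorem pempty_ple (S : PermPt) : ple pempty S :=
  ⟨fun i => Fin.elim0 i, fun i => Fin.elim0 i, fun i => Fin.elim0 i⟩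

theorem pone_ple {S : PermPt} (h : 0 < S.1) : ple pone S := by
  rw [ple_iff]
  refine ⟨fun _ => 0, fun _ _ => h, ?_, ?_⟩
  · intro i j hij hj
    have : j < 1 := hj
    omega
  · intro i hi j hj
    have : i < 1 := hi
    have : j < 1 := hj
    obtain rfl : i = 0 := by omega
    obtain rfl : j = 0 := by omega
    simp

theorem exists_mid {S T : PermPt} (h : ple S T) (hl : S.1 + 2 ≤ T.1) :
    ∃ W, ple S W ∧ ple W T ∧ S.1 < W.1 ∧ W.1 < T.1 := by
  obtain ⟨f, hf, h⟩ := h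
  let s : Finset (Fin T.1) := Finset.univ.image f
  have hs : s.card = S.1 := by
    rw [Finset.card_image_of_injective _ hf.injective]; simp
  obtain ⟨c, hc⟩ : ∃ c, c ∉ s := by
    by_contra hcon
    push Not at hcon
    have : s = Finset.univ := Finset.eq_univ_iff_forall.2 hcon
    rw [this] at hs
    simp at hs
    omega
  let s' := insert c s
  have hs' : s'.card = S.1 + 1 := by
    rw [Finset.card_insert_of_notMem hc, hs]
  let o := s'.orderIsoOfFin hs'
  let g : ℕ → ℕ := fun i => if h : i < S.1 + 1 then (T.2 (o ⟨i, h⟩ : Fin T.1) : ℕ) else 0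
  obtain ⟨W, hW, hW'⟩ := std (S.1 + 1) g (by
    intro i hi j hj hij
    simp only [g, hi, hj, dite_true] at hij
    have := o.injective (Subtype.ext (T.2.injective (Fin.ext hij)))
    simpa using this)
  obtain ⟨n, w⟩ := W
  obtain rfl : n = S.1 + 1 := hW
  have key : ∀ i j : Fin (S.1 + 1), w i ≤ w j ↔ T.2 (o i) ≤ T.2 (o j) := by
    intro i j
    have := hW' i i.2 j j.2
    rw [ev_fin ⟨S.1 + 1, w⟩ i, ev_fin ⟨S.1 + 1, w⟩ j] at this
    simp only [g, i.2, j.2, dite_true] at this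
    exact this
  refine ⟨⟨S.1 + 1, w⟩, ?_, ?_, by simp, by simp; omega⟩
  · refine ⟨fun i => o.symm ⟨f i, by simp [s', s]⟩, ?_, ?_⟩
    · intro i j hij
      apply o.symm.strictMono
      exact hf hij
    · intro i j
      rw [key]
      simpa using h i j
  · exact ⟨fun i => (o i : Fin T.1), fun i j hij => o.strictMono hij, key⟩


theorem len_pds (a b : PermPt) : (pdsP a b).1 = a.1 + b.1 := rfl

theorem pds_castAdd {m n : ℕ} (α : Equiv.Perm (Fin m)) (β : Equiv.Perm (Fin n)) (i : Fin m) :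
    pds α β (Fin.castAdd n i) = Fin.castAdd n (α i) := by
  unfold pds
  rw [Equiv.trans_apply, finSumFinEquiv_symm_apply_castAdd]
  rfl

theorem pds_natAdd {m n : ℕ} (α : Equiv.Perm (Fin m)) (β : Equiv.Perm (Fin n)) (i : Fin n) :
    pds α β (Fin.natAdd m i) = Fin.natAdd m (β i) := by
  unfold pds
  rw [Equiv.trans_apply, finSumFinEquiv_symm_apply_natAdd]
  rfl

theorem pss_castAdd {m n : ℕ} (α : Equiv.Perm (Fin m)) (β : Equiv.Perm (Fin n)) (i : Fin m) :
    (pss α β (Fin.castAdd n i) : ℕ) = n + (α i : ℕ) := by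
  unfold pss
  rw [Equiv.trans_apply, finSumFinEquiv_symm_apply_castAdd]
  rfl

theorem pss_natAdd {m n : ℕ} (α : Equiv.Perm (Fin m)) (β : Equiv.Perm (Fin n)) (i : Fin n) :
    (pss α β (Fin.natAdd m i) : ℕ) = (β i : ℕ) := by
  unfold pss
  rw [Equiv.trans_apply, finSumFinEquiv_symm_apply_natAdd]
  rfl

theorem ev_left {a b : PermPt} {i : ℕ} (h : i < a.1) : ev (pdsP a b) i = ev a i := by
  have h' : i < (pdsP a b).1 := by rw [len_pds]; omega
  rw [ev_of_lt h, ev_of_lt h']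
  exact congrArg Fin.val (pds_castAdd a.2 b.2 ⟨i, h⟩)

theorem ev_right {a b : PermPt} {i : ℕ} (h : i < b.1) :
    ev (pdsP a b) (a.1 + i) = a.1 + ev b i := by
  have h' : a.1 + i < (pdsP a b).1 := by rw [len_pds]; omega
  rw [ev_of_lt h, ev_of_lt h']
  exact congrArg Fin.val (pds_natAdd a.2 b.2 ⟨i, h⟩)

theorem ev_right' {a b : PermPt} {i : ℕ} (h0 : a.1 ≤ i) (h : i < a.1 + b.1) :
    ev (pdsP a b) i = a.1 + ev b (i - a.1) := by
  obtain ⟨j, rfl⟩ := Nat.exists_eq_add_of_le h0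
  rw [ev_right (by omega)]; simp

theorem pds_cancel {a b a' b' : PermPt} (h : pdsP a b = pdsP a' b') (hl : a.1 = a'.1) :
    a = a' ∧ b = b' := by
  have hL : a.1 + b.1 = a'.1 + b'.1 := congrArg Sigma.fst h
  constructor
  · apply ext_ev hl
    intro i hi
    rw [← ev_left (b := b) hi, h, ev_left (by omega)]
  · apply ext_ev (by omega)
    intro i hi
    have h1 := ev_right (a := a) hi
    have h2 := ev_right (a := a') (b := b') (i := i) (by omega)
    rw [h, hl, h2] at h1
    omega

theorem cut {x : PermPt} {k : ℕ} (hk : k ≤ x.1)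
    (h : ∀ i < k, ∀ j < x.1, k ≤ j → ev x i < ev x j) :
    ∃ x1 x2, x = pdsP x1 x2 ∧ x1.1 = k := by
  obtain ⟨x1, l1, h1⟩ := std k (fun i => ev x i)
    (fun i hi j hj hij => ev_inj (by omega) (by omega) hij)
  obtain ⟨x2, l2, h2⟩ := std (x.1 - k) (fun i => ev x (k + i))
    (fun i hi j hj hij => by have := ev_inj (by omega) (by omega) hij; omega)
  refine ⟨x1, x2, ?_, l1⟩
  apply ext_ord (by rw [len_pds]; omega)
  intro i hi j hj
  rcases lt_or_ge i k with hik | hik <;> rcases lt_or_ge j k with hjk | hjk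
  · rw [ev_left (by omega), ev_left (by omega), h1 i hik j hjk]
  · rw [ev_left (by omega), ev_right' (by omega) (by omega)]
    have := h i hik j hj hjk
    have := ev_lt (T := x1) (i := i) (by omega)
    omega
  · rw [ev_left (i := j) (by omega), ev_right' (by omega) (by omega)]
    have := h j hjk i hi hik
    have := ev_lt (T := x1) (i := j) (by omega)
    omega
  · rw [ev_right' (by omega) (by omega), ev_right' (by omega) (by omega)]
    have := h2 (i - k) (by omega) (j - k) (by omega)
    rw [show k + (i - k) = i by omega, show k + (j - k) = j by omega] at this
    rw [← this, l1]
    omega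

theorem pds_lt_ge {a b : PermPt} {i j : ℕ} (hi : i < a.1) (hj : a.1 ≤ j) (hj' : j < a.1 + b.1) :
    ev (pdsP a b) i < a.1 ∧ a.1 ≤ ev (pdsP a b) j := by
  rw [ev_left hi, ev_right' hj hj']
  have := ev_lt hi
  omega

/-- The algebraic properties of a sum operation used in the argument. -/
structure Good (op : PermPt → PermPt → PermPt) : Prop where
  len : ∀ a b, (op a b).1 = a.1 + b.1
  mono : ∀ a b a' b', ple a a' → ple b b' → ple (op a b) (op a' b')
  assoc : ∀ a b c, op (op a b) c = op a (op b c)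
  unit_left : ∀ a b : PermPt, a.1 = 0 → op a b = b
  unit_right : ∀ a b : PermPt, b.1 = 0 → op a b = a
  split : ∀ x a b, ple x (op a b) → ∃ x1 x2, x = op x1 x2 ∧ ple x1 a ∧ ple x2 b
  levi : ∀ x1 x2 y1 y2, op x1 x2 = op y1 y2 → x1.1 ≤ y1.1 → ∃ z, y1 = op x1 z ∧ x2 = op z y2

theorem pds_assoc (a b c : PermPt) : pdsP (pdsP a b) c = pdsP a (pdsP b c) := by
  apply ext_ev (by simp only [len_pds]; omega)
  intro i hi
  simp only [len_pds] at hi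
  rcases lt_or_ge i a.1 with h | h
  · rw [ev_left (by rw [len_pds]; omega), ev_left h, ev_left h]
  · obtain ⟨j, rfl⟩ := Nat.exists_eq_add_of_le h
    rw [ev_right (by rw [len_pds]; omega)]
    rcases lt_or_ge j b.1 with h' | h'
    · rw [ev_left (by rw [len_pds]; omega), ev_right h', ev_left h']
    · obtain ⟨k, rfl⟩ := Nat.exists_eq_add_of_le h'
      rw [ev_right (by omega), ← add_assoc, ← len_pds, ev_right (by omega), len_pds]
      omega

theorem good_pds : Good pdsP where
  len := len_pds
  assoc := pds_assoc
  unit_left := by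
    intro a b h
    apply ext_ev (by rw [len_pds]; omega)
    intro i hi
    rw [len_pds] at hi
    rw [ev_right' (by omega) hi, h]; simp
  unit_right := by
    intro a b h
    apply ext_ev (by rw [len_pds]; omega)
    intro i hi
    rw [len_pds] at hi
    rw [ev_left (by omega)]
  mono := by
    intro a b a' b' ha hb
    obtain ⟨f, f1, f2, f3⟩ := ple_iff.1 ha
    obtain ⟨g, g1, g2, g3⟩ := ple_iff.1 hb
    rw [ple_iff]
    refine ⟨fun i => if i < a.1 then f i else a'.1 + g (i - a.1), ?_, ?_, ?_⟩
    · intro i hi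
      rw [len_pds] at *
      dsimp only
      split_ifs with h
      · have := f1 i h; omega
      · have := g1 (i - a.1) (by omega); omega
    · intro i j hij hj
      rw [len_pds] at *
      dsimp only
      split_ifs with h h' h'
      · exact f2 i j hij h'
      · have := f1 i h; omega
      · omega
      · have := g2 (i - a.1) (j - a.1) (by omega) (by omega); omega
    · intro i hi j hj
      rw [len_pds] at hi hj
      dsimp only
      split_ifs with h h' h'
      · rw [ev_left h, ev_left h', ev_left (f1 i h), ev_left (f1 j h')]
        exact f3 i h j h'
      · rw [ev_left h, ev_right' (by omega) (by omega), ev_left (f1 i h),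
          ev_right (g1 _ (by omega))]
        have := ev_lt h
        have := ev_lt (f1 i h)
        omega
      · rw [ev_left (i := j) h', ev_right' (by omega) (by omega), ev_left (f1 j h'),
          ev_right (g1 _ (by omega))]
        have := ev_lt h'
        have := ev_lt (f1 j h')
        omega
      · rw [ev_right' (by omega) (by omega), ev_right' (by omega) (by omega),
          ev_right (g1 _ (by omega)), ev_right (g1 _ (by omega))]
        have := g3 (i - a.1) (by omega) (j - a.1) (by omega)
        omega
  split := by
    intro x a b h
    obtain ⟨f, f1, f2, f3⟩ := ple_iff.1 h
    rw [len_pds] at f1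
    have hex : ∃ k, x.1 ≤ k ∨ a.1 ≤ f k := ⟨x.1, Or.inl le_rfl⟩
    let k := Nat.find hex
    have hk : x.1 ≤ k ∨ a.1 ≤ f k := Nat.find_spec hex
    have hkx : k ≤ x.1 := Nat.find_min' hex (Or.inl le_rfl)
    have hlt : ∀ i < k, f i < a.1 := by
      intro i hi
      have := Nat.find_min hex hi
      omega
    have hge : ∀ i < x.1, k ≤ i → a.1 ≤ f i := by
      intro i hi hki
      rcases hki.eq_or_lt with rfl | h'
      · omega
      · have := f2 k i h' hi
        omega
    have hiff : ∀ i < x.1, ∀ j < x.1,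
        (ev x i < ev x j ↔ ev (pdsP a b) (f i) < ev (pdsP a b) (f j)) := by
      intro i hi j hj
      have := f3 j hj i hi
      omega
    obtain ⟨x1, x2, hx, l1⟩ := cut hkx (by
      intro i hi j hj hkj
      rw [hiff i (by omega) j hj]
      have := pds_lt_ge (b := b) (hlt i hi) (hge j hj hkj) (f1 j hj)
      omega)
    have hL : x.1 = x1.1 + x2.1 := by rw [hx, len_pds]
    refine ⟨x1, x2, hx, ?_, ?_⟩
    · rw [ple_iff]
      refine ⟨f, fun i hi => hlt i (by omega), fun i j hij hj => f2 i j hij (by omega), ?_⟩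
      intro i hi j hj
      have := f3 i (by omega) j (by omega)
      rw [ev_left (hlt i (by omega)), ev_left (hlt j (by omega)), hx, ev_left hi, ev_left hj] at this
      exact this
    · rw [ple_iff]
      have hge' : ∀ i < x2.1, a.1 ≤ f (x1.1 + i) := fun i hi => hge _ (by omega) (by omega)
      have hlt' : ∀ i < x2.1, f (x1.1 + i) < a.1 + b.1 := fun i hi => f1 _ (by omega)
      refine ⟨fun i => f (x1.1 + i) - a.1, ?_, ?_, ?_⟩
      · intro i hi
        have := hge' i hi
        have := hlt' i hi
        dsimp only
        omega
      · intro i j hij hj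
        have := hge' i (by omega)
        have := f2 (x1.1 + i) (x1.1 + j) (by omega) (by omega)
        dsimp only
        omega
      · intro i hi j hj
        have := f3 (x1.1 + i) (by omega) (x1.1 + j) (by omega)
        rw [ev_right' (hge' i hi) (hlt' i hi), ev_right' (hge' j hj) (hlt' j hj), hx, ev_right hi,
          ev_right hj] at this
        dsimp only
        omega
  levi := by
    intro x1 x2 y1 y2 h hl
    have hL : x1.1 + x2.1 = y1.1 + y2.1 := congrArg Sigma.fst h
    obtain ⟨u, z, hu, lu⟩ := cut hl (by
      intro i hi j hj hkj
      rw [← ev_left (b := y2) hj, ← ev_left (b := y2) (show i < y1.1 by omega), ← h]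
      have := pds_lt_ge (b := x2) hi hkj (by omega)
      omega)
    subst hu
    rw [pds_assoc] at h
    obtain ⟨h1, h2⟩ := pds_cancel h lu.symm
    exact ⟨z, by rw [h1], h2⟩

end SDB
namespace SDB

/-- Opposite operation. -/
theorem Good.opp {op : PermPt → PermPt → PermPt} (G : Good op) : Good (fun a b => op b a) where
  len a b := by rw [G.len]; omega
  mono a b a' b' h h' := G.mono _ _ _ _ h' h
  assoc a b c := (G.assoc c b a).symm
  unit_left a b h := G.unit_right b a h
  unit_right a b h := G.unit_left b a h
  split x a b h := by
    obtain ⟨x1, x2, h1, h2, h3⟩ := G.split x b a h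
    exact ⟨x2, x1, h1, h3, h2⟩
  levi x1 x2 y1 y2 h hl := by
    have hL := congrArg Sigma.fst h
    simp only [G.len] at hL
    obtain ⟨z, h1, h2⟩ := G.levi y2 y1 x2 x1 h.symm (by omega)
    exact ⟨z, h2, h1⟩

/-- The open interval. -/
def Mem (S T x : PermPt) : Prop := (ple S x ∧ S.1 < x.1) ∧ (ple x T ∧ x.1 < T.1)

/-- Disconnectedness of the open interval, in two-colouring form. -/
def Dis (S T : PermPt) : Prop := ∃ A : PermPt → Prop,
  (∀ p q, Mem S T p → Mem S T q → ple p q → (A p ↔ A q)) ∧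
  (∃ p, Mem S T p ∧ A p) ∧ ∃ p, Mem S T p ∧ ¬ A p

def Res (S T : PermPt) : Prop := ple S T ∧ S.1 + 3 ≤ T.1 ∧ Dis S T

theorem Dis.disconn {S T : PermPt} (h : Dis S T) :
    Disconn {ρ : PermPt | plt S ρ ∧ plt ρ T} := by
  have hm : ∀ ρ, (plt S ρ ∧ plt ρ T) ↔ Mem S T ρ := by
    intro ρ; rw [plt_iff, plt_iff]; rfl
  obtain ⟨A, h1, ⟨p, hp, hpA⟩, ⟨q, hq, hqA⟩⟩ := h
  refine ⟨{x | Mem S T x ∧ A x}, {x | Mem S T x ∧ ¬ A x}, ?_, ⟨p, hp, hpA⟩, ⟨q, hq, hqA⟩, ?_⟩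
  · ext x
    simp only [Set.mem_union, Set.mem_ofPred_eq, hm]
    tauto
  · rintro x ⟨hx, hxA⟩ y ⟨hy, hyA⟩
    constructor
    · intro h
      exact hyA ((h1 x y hx hy h).1 hxA)
    · intro h
      exact hyA ((h1 y x hy hx h).2 hxA)

def Ind (op : PermPt → PermPt → PermPt) (P : PermPt) : Prop :=
  ∀ x y, P = op x y → x.1 = 0 ∨ y.1 = 0

section
variable {op : PermPt → PermPt → PermPt}

theorem len0 {x : PermPt} (h : x.1 = 0) (y : PermPt) : ple x y := by
  have : x = pempty := ext_ev h (fun i hi => by omega)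
  rw [this]; exact pempty_ple y

theorem Good.le_right (G : Good op) (a b : PermPt) : ple b (op a b) := by
  have := G.mono pempty b a b (pempty_ple _) (ple_refl _)
  rwa [G.unit_left _ _ rfl] at this

theorem Good.exists_D (G : Good op) (α x : PermPt) : ∃ x1 d, x = op x1 d ∧ ple x1 α ∧
    ∀ y, ple x (op α y) → ple d y := by
  classical
  have hex : ∃ n, ∃ x1 d : PermPt, d.1 = n ∧ x = op x1 d ∧ ple x1 α :=
    ⟨x.1, pempty, x, rfl, (G.unit_left _ _ rfl).symm, pempty_ple _⟩
  obtain ⟨x1, d, hd, hx, h1⟩ := Nat.find_spec hex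
  refine ⟨x1, d, hx, h1, ?_⟩
  intro y hy
  obtain ⟨u, w, huw, hu, hw⟩ := G.split _ _ _ hy
  have hmin : Nat.find hex ≤ w.1 := Nat.find_min' hex ⟨u, w, rfl, huw, hu⟩
  have e : op u w = op x1 d := by rw [← huw, ← hx]
  have hL := congrArg Sigma.fst e
  simp only [G.len] at hL
  obtain ⟨z, _, h3⟩ := G.levi _ _ _ _ e (by omega)
  rw [h3] at hw
  exact ple_trans (G.le_right z d) hw

theorem Good.cancel (G : Good op) {α s w : PermPt} (h : ple (op α s) (op α w)) : ple s w := by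
  obtain ⟨u, v, huv, hu, hv⟩ := G.split _ _ _ h
  obtain ⟨z, _, h3⟩ := G.levi _ _ _ _ huv.symm (ple_len hu)
  rw [h3] at hv
  exact ple_trans (G.le_right z s) hv

theorem Good.push (G : Good op) {α u p q : PermPt} (hα : Ind op α) (hu : u.1 < α.1)
    (h : ple (op α p) (op u q)) : ple (op α p) q := by
  obtain ⟨x, y, hxy, hx, hy⟩ := G.split _ _ _ h
  have hl := ple_len hx
  obtain ⟨t, h1, h2⟩ := G.levi _ _ _ _ hxy.symm (by omega)
  have hL : α.1 = x.1 + t.1 := by rw [h1, G.len]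
  rcases hα _ _ h1 with h0 | h0
  · rw [hxy, G.unit_left _ _ h0]; exact hy
  · omega

theorem Good.aug_ind (G : Good op) {α S T : PermPt} (hα : Ind op α) (hα0 : 0 < α.1) (h : Res S T) :
    Res (op α S) (op α T) := by
  obtain ⟨hST, hl, A, hA, ⟨p, hp, hpA⟩, ⟨q, hq, hqA⟩⟩ := h
  refine ⟨G.mono _ _ _ _ (ple_refl _) hST, by rw [G.len, G.len]; omega, ?_⟩
  choose H D hD1 hD2 hD3 using G.exists_D α
  have hDαle : ∀ x, ple x (op α (D x)) := by
    intro x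
    have := G.mono _ _ _ _ (hD2 x) (ple_refl (D x))
    rwa [← hD1] at this
  have hDmono : ∀ x y, ple x y → ple (D x) (D y) := fun x y hxy =>
    hD3 _ _ (ple_trans hxy (hDαle y))
  have hDα : ∀ x, D (op α x) = x := by
    intro x
    have h1 : ple (D (op α x)) x := hD3 _ _ (ple_refl _)
    have h2 : ple x (D (op α x)) := G.cancel (hDαle (op α x))
    exact ple_eq h1 (ple_len h2)
  have hmem : ∀ x, Mem (op α S) (op α T) x → D x ≠ T → Mem S T (D x) := by
    intro x hx hne
    have h1 : ple S (D x) := G.cancel (ple_trans hx.1.1 (hDαle x))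
    have h2 : ple (D x) T := hD3 _ _ hx.2.1
    refine ⟨⟨h1, ?_⟩, ⟨h2, ?_⟩⟩
    · by_contra hc
      have e := ple_eq h1 (by omega)
      have h3 := ple_len (hDαle x)
      rw [← e] at h3
      have := hx.1.2
      omega
    · by_contra hc
      exact hne (ple_eq h2 (by omega))
  have hmemα : ∀ p, Mem S T p → Mem (op α S) (op α T) (op α p) := by
    intro p hp
    refine ⟨⟨G.mono _ _ _ _ (ple_refl _) hp.1.1, ?_⟩, ⟨G.mono _ _ _ _ (ple_refl _) hp.2.1, ?_⟩⟩
    · have := hp.1.2; rw [G.len, G.len]; omega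
    · have := hp.2.2; rw [G.len, G.len]; omega
  have hneT : ∀ p, Mem S T p → p ≠ T := by
    rintro p hp rfl
    exact absurd hp.2.2 (by omega)
  -- the key claim about limbo elements
  have key : ∀ x y, Mem (op α S) (op α T) x → Mem (op α S) (op α T) y → ple y x → D x = T →
      D y ≠ T → (A (D y) ↔ A (op α S)) := by
    intro x y hx hy hyx hxT hyT
    have hz := hmem y hy hyT
    have hx1 : (H x).1 < α.1 := by
      have h1 := congrArg Sigma.fst (hD1 x)
      rw [G.len, hxT] at h1
      have := hx.2.2
      rw [G.len] at this
      omega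
    have hα2 : ∀ w, Mem S T (op α w) → Mem S T w → (A w ↔ A (op α w)) := fun w h1 h2 =>
      hA _ _ h2 h1 (G.le_right _ _)
    by_cases hy1 : (H y).1 < α.1
    · have h1 : ple (op α S) (D y) := by
        apply G.push hα hy1
        rw [← hD1]; exact hy.1.1
      have h2 := ple_len h1
      have h3 := hz.2.2
      refine (hA _ _ ⟨⟨G.le_right _ _, by rw [G.len]; omega⟩,
        ⟨ple_trans h1 hz.2.1, by omega⟩⟩ hz h1).symm
    · have e : H y = α := ple_eq (hD2 y) (by omega)
      have h1 : ple (op α (D y)) T := by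
        apply G.push hα hx1
        rw [← hxT, ← hD1, ← e, ← hD1]; exact hyx
      have hl1 := ple_len h1
      rw [G.len] at hl1
      have z1 := hz.1.2
      have z2 := hz.2.2
      -- general facts
      have mm : ∀ β w, β.1 + w.1 < T.1 → S.1 < β.1 + w.1 → ple β α → ple S w → ple w (D y) →
          Mem S T (op β w) := by
        intro β w a1 a2 a3 a4 a5
        refine ⟨⟨ple_trans a4 (G.le_right _ _), by rw [G.len]; omega⟩,
          ⟨ple_trans (G.mono _ _ _ _ a3 a5) h1, by rw [G.len]; omega⟩⟩
      have hαS : Mem S T (op α S) :=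
        mm α S (by omega) (by omega) (ple_refl _) (ple_refl _) hz.1.1
      by_cases hc : α.1 + (D y).1 < T.1
      · have m2 := mm α (D y) hc (by omega) (ple_refl _) hz.1.1 (ple_refl _)
        exact (hA _ _ hz m2 (G.le_right _ _)).trans
          (hA _ _ hαS m2 (G.mono _ _ _ _ (ple_refl _) hz.1.1)).symm
      · by_cases hα2 : 2 ≤ α.1
        · have hone : ple pone α := pone_ple hα0
          have l1 : pone.1 = 1 := rfl
          have m1 := mm pone (D y) (by omega) (by omega) hone hz.1.1 (ple_refl _)
          have m2 := mm pone S (by omega) (by omega) hone (ple_refl _) hz.1.1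
          exact (hA _ _ hz m1 (G.le_right _ _)).trans
            ((hA _ _ m2 m1 (G.mono _ _ _ _ (ple_refl _) hz.1.1)).symm.trans
            (hA _ _ m2 hαS (G.mono _ _ _ _ hone (ple_refl _))))
        · obtain ⟨w, w1, w2, w3, w4⟩ := exists_mid hz.1.1 (by omega)
          have m0 : Mem S T w := ⟨⟨w1, w3⟩, ⟨ple_trans w2 hz.2.1, by omega⟩⟩
          have m1 := mm α w (by omega) (by omega) (ple_refl _) w1 w2
          exact (hA _ _ m0 hz w2).symm.trans ((hA _ _ m0 m1 (G.le_right _ _)).trans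
            (hA _ _ hαS m1 (G.mono _ _ _ _ (ple_refl _) w1)).symm)
  refine ⟨fun x => (D x = T ∧ A (op α S)) ∨ (D x ≠ T ∧ A (D x)), ?_, ?_, ?_⟩
  · intro y x hy hx hyx
    by_cases hyT : D y = T
    · have hxT : D x = T := by
        have h1 := hDmono _ _ hyx
        rw [hyT] at h1
        have h2 : ple (D x) T := hD3 _ _ hx.2.1
        exact ple_eq h2 (ple_len h1)
      simp [hyT, hxT]
    · by_cases hxT : D x = T
      · have := key x y hx hy hyx hxT hyT
        simp [hyT, hxT, this]
      · have := hA _ _ (hmem y hy hyT) (hmem x hx hxT) (hDmono _ _ hyx)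
        simp [hyT, hxT, this]
  · refine ⟨op α p, hmemα p hp, ?_⟩
    simp [hDα, hneT p hp, hpA]
  · refine ⟨op α q, hmemα q hq, ?_⟩
    simp [hDα, hneT q hq, hqA]

theorem Good.aug (G : Good op) {S T : PermPt} (h : Res S T) : ∀ (n : ℕ) (α : PermPt), α.1 = n →
    Res (op α S) (op α T) := by
  intro n
  induction n using Nat.strong_induction_on generalizing S T with
  | _ n ih =>
    intro α hn
    rcases Nat.eq_zero_or_pos α.1 with h0 | h0
    · rw [G.unit_left _ _ h0, G.unit_left _ _ h0]; exact h
    · by_cases hα : Ind op α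
      · exact G.aug_ind hα h0 h
      · unfold Ind at hα
        push Not at hα
        obtain ⟨x, y, hxy, hx, hy⟩ := hα
        have hL : α.1 = x.1 + y.1 := by rw [hxy, G.len]
        rw [hxy, G.assoc, G.assoc]
        exact ih x.1 (by omega) (ih y.1 (by omega) h y rfl) x rfl

theorem Good.aug_left (G : Good op) {S T : PermPt} (α : PermPt) (h : Res S T) : Res (op α S) (op α T) :=
  G.aug h _ α rfl

theorem Good.aug_right (G : Good op) {S T : PermPt} (α : PermPt) (h : Res S T) : Res (op S α) (op T α) :=
  G.opp.aug h _ α rfl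

theorem Good.base (G : Good op) {P : PermPt} (hP : Ind op P) (h3 : 3 ≤ P.1) : Res P (op P P) := by
  have l1 : pone.1 = 1 := rfl
  refine ⟨G.le_right _ _, by rw [G.len]; omega, ?_⟩
  have hone : ple pone P := pone_ple (by omega)
  have bad1 : ∀ r r' : PermPt, 0 < r.1 → r'.1 < P.1 → ¬ ple (op P r) (op r' P) := by
    intro r r' h0 h1 h
    have := ple_len (G.push hP h1 h)
    rw [G.len] at this
    omega
  have hP' : Ind (fun a b => op b a) P := fun x y h => (hP y x h).symm
  have bad2 : ∀ r r' : PermPt, 0 < r.1 → r'.1 < P.1 → ¬ ple (op r P) (op P r') := by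
    intro r r' h0 h1 h
    have := ple_len (G.opp.push hP' h1 h)
    rw [G.len] at this
    omega
  have form : ∀ x, Mem P (op P P) x → (∃ r : PermPt, 0 < r.1 ∧ r.1 < P.1 ∧ x = op P r) ∨
      (∃ r : PermPt, 0 < r.1 ∧ r.1 < P.1 ∧ x = op r P) := by
    intro x hx
    obtain ⟨x1, x2, e, h1, h2⟩ := G.split _ _ _ hx.2.1
    have hl1 := hx.1.2
    have hl2 := hx.2.2
    have hL : x.1 = x1.1 + x2.1 := by rw [e, G.len]
    rw [G.len] at hl2
    have hle := hx.1.1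
    rw [e] at hle
    obtain ⟨u, v, e', hu, hv⟩ := G.split _ _ _ hle
    rcases hP _ _ e' with h0 | h0
    · rw [G.unit_left _ _ h0] at e'
      rw [← e'] at hv
      have : x2 = P := ple_eq h2 (ple_len hv)
      subst this
      exact Or.inr ⟨x1, by omega, by omega, e⟩
    · rw [G.unit_right _ _ h0] at e'
      rw [← e'] at hu
      have : x1 = P := ple_eq h1 (ple_len hu)
      subst this
      exact Or.inl ⟨x2, by omega, by omega, e⟩
  refine ⟨fun x => ∃ r : PermPt, 0 < r.1 ∧ r.1 < P.1 ∧ x = op P r, ?_, ?_, ?_⟩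
  · intro p q hp hq hpq
    constructor
    · rintro ⟨r, h1, h2, e⟩
      rcases form q hq with h | ⟨r', h1', h2', e'⟩
      · exact h
      · rw [e, e'] at hpq
        exact absurd hpq (bad1 _ _ h1 h2')
    · rintro ⟨r, h1, h2, e⟩
      rcases form p hp with h | ⟨r', h1', h2', e'⟩
      · exact h
      · rw [e, e'] at hpq
        exact absurd hpq (bad2 _ _ h1' h2)
  · refine ⟨op P pone, ⟨⟨G.opp.le_right _ _, ?_⟩, ⟨G.mono _ _ _ _ (ple_refl _) hone, ?_⟩⟩,
      pone, by omega, by omega, rfl⟩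
    · rw [G.len]; omega
    · rw [G.len, G.len]; omega
  · refine ⟨op pone P, ⟨⟨G.le_right _ _, ?_⟩, ⟨G.mono _ _ _ _ hone (ple_refl _), ?_⟩⟩, ?_⟩
    · rw [G.len]; omega
    · rw [G.len, G.len]; omega
    · rintro ⟨r, h1, h2, e⟩
      exact bad1 r pone h1 (by omega) (by rw [← e]; exact ple_refl _)

end

end SDB
namespace SDB

/-- Complement of a permutation. -/
def C (T : PermPt) : PermPt := ⟨T.1, T.2.trans Fin.revPerm⟩

theorem len_C (T : PermPt) : (C T).1 = T.1 := rfl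

theorem ev_C {T : PermPt} {i : ℕ} (h : i < T.1) : ev (C T) i + ev T i + 1 = T.1 := by
  rw [ev_of_lt h, ev_of_lt (T := C T) h]
  have h1 : ((C T).2 ⟨i, h⟩ : ℕ) = T.1 - ((T.2 ⟨i, h⟩ : ℕ) + 1) := by
    exact Fin.val_rev (T.2 ⟨i, h⟩)
  have h2 := (T.2 ⟨i, h⟩).2
  omega

theorem C_C (T : PermPt) : C (C T) = T := by
  apply ext_ev (S := C (C T)) (T := T) rfl
  intro i hi
  have h1 := ev_C (T := T) (i := i) hi
  have h2 := ev_C (T := C T) (i := i) hi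
  rw [len_C] at h2
  omega

theorem ple_C {S T : PermPt} (h : ple S T) : ple (C S) (C T) := by
  obtain ⟨f, f1, f2, f3⟩ := ple_iff.1 h
  rw [ple_iff]
  refine ⟨f, f1, f2, ?_⟩
  intro i hi j hj
  rw [len_C] at hi hj
  have a1 := ev_C hi
  have a2 := ev_C hj
  have a3 := ev_C (f1 i hi)
  have a4 := ev_C (f1 j hj)
  have := f3 j hj i hi
  omega

theorem len_pss (a b : PermPt) : (pssP a b).1 = a.1 + b.1 := rfl

theorem evs_left {a b : PermPt} {i : ℕ} (h : i < a.1) : ev (pssP a b) i = b.1 + ev a i := by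
  have h' : i < (pssP a b).1 := by rw [len_pss]; omega
  rw [ev_of_lt h, ev_of_lt h']
  exact pss_castAdd a.2 b.2 ⟨i, h⟩

theorem evs_right {a b : PermPt} {i : ℕ} (h : i < b.1) :
    ev (pssP a b) (a.1 + i) = ev b i := by
  have h' : a.1 + i < (pssP a b).1 := by rw [len_pss]; omega
  rw [ev_of_lt h, ev_of_lt h']
  exact pss_natAdd a.2 b.2 ⟨i, h⟩

theorem C_pds (a b : PermPt) : C (pdsP a b) = pssP (C a) (C b) := by
  apply ext_ev (S := C (pdsP a b)) (T := pssP (C a) (C b)) rfl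
  intro i hi
  rw [len_C, len_pds] at hi
  have h1 := ev_C (T := pdsP a b) (i := i) hi
  rw [len_pds] at h1
  rcases lt_or_ge i a.1 with h | h
  · rw [evs_left (by exact h)]
    rw [ev_left h] at h1
    have := ev_C h
    rw [len_C]
    omega
  · obtain ⟨j, rfl⟩ := Nat.exists_eq_add_of_le h
    have hj : j < b.1 := by omega
    have h2 := evs_right (a := C a) (b := C b) (i := j) hj
    rw [len_C] at h2
    rw [h2]
    rw [ev_right hj] at h1
    have := ev_C hj
    omega

theorem pss_eq (a b : PermPt) : pssP a b = C (pdsP (C a) (C b)) := by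
  rw [C_pds, C_C, C_C]

theorem C_pss (a b : PermPt) : C (pssP a b) = pdsP (C a) (C b) := by
  rw [pss_eq, C_C]

theorem good_pss : Good pssP where
  len := len_pss
  mono a b a' b' h h' := by
    rw [pss_eq, pss_eq]
    exact ple_C (good_pds.mono _ _ _ _ (ple_C h) (ple_C h'))
  assoc a b c := by simp only [pss_eq, C_C, pds_assoc]
  unit_left a b h := by rw [pss_eq, good_pds.unit_left _ _ (by exact h), C_C]
  unit_right a b h := by rw [pss_eq, good_pds.unit_right _ _ (by exact h), C_C]
  split x a b h := by
    have h1 := ple_C h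
    rw [C_pss] at h1
    obtain ⟨x1, x2, e, h2, h3⟩ := good_pds.split _ _ _ h1
    refine ⟨C x1, C x2, ?_, ?_, ?_⟩
    · rw [← C_pds, ← e, C_C]
    · have := ple_C h2; rwa [C_C] at this
    · have := ple_C h3; rwa [C_C] at this
  levi x1 x2 y1 y2 h hl := by
    have h1 := congrArg C h
    rw [C_pss, C_pss] at h1
    obtain ⟨z, e1, e2⟩ := good_pds.levi _ _ _ _ h1 hl
    refine ⟨C z, ?_, ?_⟩
    · rw [pss_eq, C_C, ← e1, C_C]
    · rw [pss_eq, C_C, ← e2, C_C]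

theorem Mem_C {S T x : PermPt} (h : Mem S T x) : Mem (C S) (C T) (C x) :=
  ⟨⟨ple_C h.1.1, h.1.2⟩, ⟨ple_C h.2.1, h.2.2⟩⟩

theorem Dis_C {S T : PermPt} (h : Dis S T) : Dis (C S) (C T) := by
  obtain ⟨A, hA, ⟨p, hp, hpA⟩, ⟨q, hq, hqA⟩⟩ := h
  refine ⟨fun x => A (C x), ?_, ⟨C p, Mem_C hp, ?_⟩, ⟨C q, Mem_C hq, ?_⟩⟩
  · intro p q hp hq hpq
    have hp' := Mem_C hp
    have hq' := Mem_C hq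
    rw [C_C, C_C] at hp' hq'
    exact hA _ _ hp' hq' (ple_C hpq)
  · simpa only [C_C] using hpA
  · simpa only [C_C] using hqA

theorem Sep_C {T : PermPt} (h : Separable T) : Separable (C T) := by
  induction h with
  | one =>
    have : C pone = pone := by
      apply ext_ev (S := C pone) (T := pone) rfl
      intro i hi
      have h1 := ev_lt (T := C pone) (i := i) hi
      have h2 := ev_lt (T := pone) (i := i) hi
      have l1 : pone.1 = 1 := rfl
      rw [len_C] at h1
      omega
    rw [this]; exact Separable.one
  | ds a b _ _ ha hb => rw [C_pds]; exact Separable.ss _ _ ha hb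
  | ss a b _ _ ha hb => rw [C_pss]; exact Separable.ds _ _ ha hb

def sh (p m i : ℕ) : ℕ := if i < p then i else i + m

/-- `S` is `T` with the `m` positions starting at `p` deleted. -/
def Del (S T : PermPt) (p m : ℕ) : Prop := S.1 + m = T.1 ∧ ∀ i < S.1, ∀ j < S.1,
  (ev S i ≤ ev S j ↔ ev T (sh p m i) ≤ ev T (sh p m j))

theorem Del_unique {S S' T : PermPt} {p m : ℕ} (h : Del S T p m) (h' : Del S' T p m) : S = S' := by
  have l1 := h.1
  have l2 := h'.1
  apply ext_ord (by omega)
  intro i hi j hj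
  rw [h.2 i hi j hj, h'.2 i (by omega) j (by omega)]

theorem Del_C {S T : PermPt} {p m : ℕ} (h : Del S T p m) : Del (C S) (C T) p m := by
  refine ⟨h.1, ?_⟩
  intro i hi j hj
  rw [len_C] at hi hj
  have l := h.1
  have hlt : ∀ i < S.1, sh p m i < T.1 := by
    intro i hi; unfold sh; split_ifs <;> omega
  have a1 := ev_C hi
  have a2 := ev_C hj
  have a3 := ev_C (hlt i hi)
  have a4 := ev_C (hlt j hj)
  have := h.2 j hj i hi
  omega

theorem Del_left {S T : PermPt} {p m : ℕ} (h : Del S T p m) (hp : p + m ≤ T.1) (B : PermPt) :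
    Del (pdsP S B) (pdsP T B) p m := by
  have l := h.1
  refine ⟨by rw [len_pds, len_pds]; omega, ?_⟩
  have e1 : ∀ i < S.1, sh p m i < T.1 := by
    intro i hi; unfold sh; split_ifs <;> omega
  have e2 : ∀ j, sh p m (S.1 + j) = T.1 + j := by
    intro j; unfold sh; split_ifs <;> omega
  intro i hi j hj
  rw [len_pds] at hi hj
  rcases lt_or_ge i S.1 with hi' | hi' <;> rcases lt_or_ge j S.1 with hj' | hj'
  · rw [ev_left hi', ev_left hj', ev_left (e1 i hi'), ev_left (e1 j hj')]
    exact h.2 i hi' j hj'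
  · obtain ⟨j, rfl⟩ := Nat.exists_eq_add_of_le hj'
    rw [ev_left hi', ev_right (by omega), ev_left (e1 i hi'), e2, ev_right (by omega)]
    have := ev_lt hi'
    have := ev_lt (e1 i hi')
    omega
  · obtain ⟨i, rfl⟩ := Nat.exists_eq_add_of_le hi'
    rw [ev_left hj', ev_right (by omega), ev_left (e1 j hj'), e2, ev_right (by omega)]
    have := ev_lt hj'
    have := ev_lt (e1 j hj')
    omega
  · obtain ⟨i, rfl⟩ := Nat.exists_eq_add_of_le hi'
    obtain ⟨j, rfl⟩ := Nat.exists_eq_add_of_le hj'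
    rw [e2, e2, ev_right (by omega), ev_right (by omega), ev_right (by omega), ev_right (by omega)]
    omega

theorem Del_right {S T : PermPt} {p m : ℕ} (h : Del S T p m) (A : PermPt) :
    Del (pdsP A S) (pdsP A T) (A.1 + p) m := by
  have l := h.1
  refine ⟨by rw [len_pds, len_pds]; omega, ?_⟩
  have e0 : ∀ i < S.1, sh p m i < T.1 := by
    intro i hi; unfold sh; split_ifs <;> omega
  have e1 : ∀ i < A.1, sh (A.1 + p) m i = i := by
    intro i hi; unfold sh; split_ifs <;> omega
  have e2 : ∀ j, sh (A.1 + p) m (A.1 + j) = A.1 + sh p m j := by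
    intro j; unfold sh; split_ifs <;> omega
  intro i hi j hj
  rw [len_pds] at hi hj
  rcases lt_or_ge i A.1 with hi' | hi' <;> rcases lt_or_ge j A.1 with hj' | hj'
  · rw [e1 i hi', e1 j hj', ev_left hi', ev_left hj', ev_left hi', ev_left hj']
  · obtain ⟨j, rfl⟩ := Nat.exists_eq_add_of_le hj'
    rw [e1 i hi', e2, ev_left hi', ev_left hi', ev_right (by omega), ev_right (e0 j (by omega))]
    have := ev_lt hi'
    omega
  · obtain ⟨i, rfl⟩ := Nat.exists_eq_add_of_le hi'
    rw [e1 j hj', e2, ev_left hj', ev_left hj', ev_right (by omega), ev_right (e0 i (by omega))]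
    have := ev_lt hj'
    omega
  · obtain ⟨i, rfl⟩ := Nat.exists_eq_add_of_le hi'
    obtain ⟨j, rfl⟩ := Nat.exists_eq_add_of_le hj'
    have := h.2 i (by omega) j (by omega)
    rw [e2, e2, ev_right (by omega), ev_right (by omega), ev_right (e0 i (by omega)),
      ev_right (e0 j (by omega))]
    omega

theorem Del_zero (P B : PermPt) : Del B (pdsP P B) 0 P.1 := by
  refine ⟨by rw [len_pds]; omega, ?_⟩
  intro i hi j hj
  have e : ∀ i, sh 0 P.1 i = P.1 + i := by intro i; simp [sh, add_comm]
  rw [e, e, ev_right hi, ev_right hj]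
  omega

theorem Dels_left {S T : PermPt} {p m : ℕ} (h : Del S T p m) (hp : p + m ≤ T.1) (B : PermPt) :
    Del (pssP S B) (pssP T B) p m := by
  rw [pss_eq, pss_eq]
  exact Del_C (Del_left (Del_C h) hp (C B))

theorem Dels_right {S T : PermPt} {p m : ℕ} (h : Del S T p m) (A : PermPt) :
    Del (pssP A S) (pssP A T) (A.1 + p) m := by
  rw [pss_eq, pss_eq]
  exact Del_C (Del_right (Del_C h) (C A))

theorem straddle {A B P : PermPt} (hP3 : 3 ≤ P.1) (hP : Ind pdsP P) (a : ℕ) (v : ℤ)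
    (hl : a + (P.1 + P.1) ≤ A.1 + B.1)
    (hv : ∀ i < P.1 + P.1, (ev (pdsP A B) (a + i) : ℤ) = v + ev (pdsP P P) i)
    (h1 : a < A.1) (h2 : A.1 < a + (P.1 + P.1)) :
    a + P.1 = A.1 ∧ (∃ A', A = pdsP A' P) ∧ ∃ B', B = pdsP P B' := by
  have hcut : ∀ i j, i < A.1 - a → A.1 - a ≤ j → j < P.1 + P.1 →
      ev (pdsP P P) i < ev (pdsP P P) j := by
    intro i j hi hj hj'
    have b1 := hv i (by omega)
    have b2 := hv j (by omega)
    have := pds_lt_ge (a := A) (b := B) (i := a + i) (j := a + j) (by omega) (by omega) (by omega)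
    omega
  have hk : A.1 - a = P.1 := by
    rcases lt_trichotomy (A.1 - a) P.1 with h | h | h
    · exfalso
      obtain ⟨x, y, e, l⟩ := cut (x := P) (k := A.1 - a) (by omega) (by
        intro i hi j hj hkj
        have := hcut i j hi hkj (by omega)
        rwa [ev_left (by omega), ev_left hj] at this)
      have hL : P.1 = x.1 + y.1 := by rw [e, len_pds]
      have := hP _ _ e
      omega
    · exact h
    · exfalso
      obtain ⟨x, y, e, l⟩ := cut (x := P) (k := A.1 - a - P.1) (by omega) (by
        intro i hi j hj hkj
        have := hcut (P.1 + i) (P.1 + j) (by omega) (by omega) (by omega)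
        rw [ev_right (by omega), ev_right hj] at this
        omega)
      have hL : P.1 = x.1 + y.1 := by rw [e, len_pds]
      have := hP _ _ e
      omega
  have hA : a + P.1 = A.1 := by omega
  -- entries
  have hvA : ∀ i < P.1, (ev A (a + i) : ℤ) = v + ev P i := by
    intro i hi
    have := hv i (by omega)
    rwa [ev_left (by omega), ev_left hi] at this
  have hvB : ∀ i < P.1, (A.1 + ev B i : ℤ) = v + P.1 + ev P i := by
    intro i hi
    have := hv (P.1 + i) (by omega)
    rw [show a + (P.1 + i) = A.1 + i by omega, ev_right (by omega), ev_right hi] at this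
    push_cast at this
    omega
  have hva : v = a := by
    obtain ⟨i0, hi0, e0⟩ := ev_surj (T := P) (k := 0) (by omega)
    obtain ⟨i1, hi1, e1⟩ := ev_surj (T := P) (k := P.1 - 1) (by omega)
    have c1 := hvB i0 hi0
    have c2 := hvA i1 hi1
    have c3 := ev_lt (T := A) (i := a + i1) (by omega)
    omega
  refine ⟨hA, ?_, ?_⟩
  · -- positions below `a` have values below `a`, since the values `a, …` are used by the block
    obtain ⟨A', Q, e, l⟩ := cut (x := A) (k := a) (by omega) (by
      intro i hi j hj hkj
      have c1 := hvA (j - a) (by omega)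
      rw [show a + (j - a) = j by omega] at c1
      by_contra hc
      have c2 := ev_lt (T := A) (i := i) (by omega)
      obtain ⟨i1, hi1, e1⟩ := ev_surj (T := P) (k := ev A i - a) (by omega)
      have c3 := hvA i1 hi1
      have := ev_inj (T := A) (i := i) (j := a + i1) (by omega) (by omega) (by omega)
      omega)
    have hL : A.1 = A'.1 + Q.1 := by rw [e, len_pds]
    refine ⟨A', ?_⟩
    have : Q = P := by
      apply ext_ev (by omega)
      intro i hi
      have c1 := hvA i (by omega)
      have c2 := ev_right (a := A') hi
      rw [← e, l] at c2
      omega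
    rw [← this, ← e]
  · have hb : ∀ i < P.1, ev B i = ev P i := by
      intro i hi
      have := hvB i hi
      omega
    obtain ⟨Q, B', e, l⟩ := cut (x := B) (k := P.1) (by omega) (by
      intro i hi j hj hkj
      rw [hb i hi]
      have c1 := ev_lt hi
      by_contra hc
      obtain ⟨i1, hi1, e1⟩ := ev_surj (T := P) (k := ev B j) (by omega)
      have := ev_inj (T := B) (i := i1) (j := j) (by omega) (by omega) (by rw [hb i1 hi1, e1])
      omega)
    refine ⟨B', ?_⟩
    have : Q = P := by
      apply ext_ev l
      intro i hi
      rw [← hb i (by omega), e, ev_left hi]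
    rw [← this, ← e]

theorem main {T : PermPt} (hT : Separable T) : ∀ P : PermPt, 3 ≤ P.1 → Ind pdsP P →
    ∀ (a : ℕ) (v : ℤ), a + (P.1 + P.1) ≤ T.1 →
    (∀ i < P.1 + P.1, (ev T (a + i) : ℤ) = v + ev (pdsP P P) i) →
    ∃ S, Res S T ∧ Del S T (a + P.1) P.1 := by
  induction hT with
  | one =>
    intro P h3 _ a v hl
    have l1 : pone.1 = 1 := rfl
    omega
  | ds A B _ _ ihA ihB =>
    intro P h3 hP a v hl hv
    rw [len_pds] at hl
    rcases le_or_gt (a + (P.1 + P.1)) A.1 with h | h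
    · obtain ⟨S, hS, hd⟩ := ihA P h3 hP a v h (by
        intro i hi
        rw [← hv i hi, ev_left (by omega)])
      exact ⟨pdsP S B, good_pds.aug_right B hS, Del_left hd (by omega) B⟩
    · rcases le_or_gt A.1 a with h' | h'
      · obtain ⟨a, rfl⟩ := Nat.exists_eq_add_of_le h'
        obtain ⟨S, hS, hd⟩ := ihB P h3 hP a (v - A.1) (by omega) (by
          intro i hi
          have := hv i hi
          rw [add_assoc, ev_right (by omega)] at this
          push_cast at this
          omega)
        refine ⟨pdsP A S, good_pds.aug_left A hS, ?_⟩
        rw [add_assoc]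
        exact Del_right hd A
      · obtain ⟨hA, ⟨A', eA⟩, ⟨B', eB⟩⟩ := straddle h3 hP a v hl hv h' h
        refine ⟨pdsP A B', ?_, ?_⟩
        · have := good_pds.aug_left A' (good_pds.aug_right B' (good_pds.base hP h3))
          rw [eA, eB]
          simpa only [pds_assoc] using this
        · have := Del_right (Del_zero P B') A
          rw [← eB, add_zero] at this
          rwa [hA]
  | ss A B _ _ ihA ihB =>
    intro P h3 hP a v hl hv
    rw [len_pss] at hl
    rcases le_or_gt (a + (P.1 + P.1)) A.1 with h | h
    · obtain ⟨S, hS, hd⟩ := ihA P h3 hP a (v - B.1) h (by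
        intro i hi
        have := hv i hi
        rw [evs_left (by omega)] at this
        push_cast at this
        omega)
      exact ⟨pssP S B, good_pss.aug_right B hS, Dels_left hd (by omega) B⟩
    · rcases le_or_gt A.1 a with h' | h'
      · obtain ⟨a, rfl⟩ := Nat.exists_eq_add_of_le h'
        obtain ⟨S, hS, hd⟩ := ihB P h3 hP a v (by omega) (by
          intro i hi
          have := hv i hi
          rwa [add_assoc, evs_right (by omega)] at this)
        refine ⟨pssP A S, good_pss.aug_left A hS, ?_⟩
        rw [add_assoc]
        exact Dels_right hd A
      · exfalso
        have c1 := hv 0 (by omega)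
        have c2 := hv (P.1 + (P.1 - 1)) (by omega)
        rw [add_zero, evs_left h', ev_left (by omega)] at c1
        obtain ⟨k, hk⟩ := Nat.exists_eq_add_of_le (show A.1 ≤ a + (P.1 + (P.1 - 1)) by omega)
        rw [hk, evs_right (by omega), ev_right (by omega)] at c2
        have c3 := ev_lt (T := B) (i := k) (by omega)
        have c4 := ev_lt (T := P) (i := 0) (by omega)
        omega

theorem main_skew {T : PermPt} (hT : Separable T) (P : PermPt) (h3 : 3 ≤ P.1)
    (hP : Ind pssP P) (a : ℕ) (v : ℤ) (hl : a + (P.1 + P.1) ≤ T.1)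
    (hv : ∀ i < P.1 + P.1, (ev T (a + i) : ℤ) = v + ev (pssP P P) i) :
    ∃ S, Dis S T ∧ Del S T (a + P.1) P.1 := by
  obtain ⟨S, hS, hd⟩ := main (Sep_C hT) (C P) h3 (by
      intro x y e
      have := congrArg C e
      rw [C_C, C_pds] at this
      exact hP (C x) (C y) this) a (T.1 - v - (P.1 + P.1)) hl (by
      intro i hi
      rw [len_C] at hi
      have c1 := hv i hi
      have c2 := ev_C (T := T) (i := a + i) (by omega)
      have c3 := ev_C (T := pssP P P) (i := i) (by rw [len_pss]; omega)
      rw [C_pss, len_pss] at c3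
      omega)
  refine ⟨C S, ?_, ?_⟩
  · have := Dis_C hS.2.2
    rwa [C_C] at this
  · have := Del_C hd
    rwa [C_C] at this

theorem ind_of_not_decomp {m : ℕ} {π : Equiv.Perm (Fin m)} (h : ¬ Decomp π) :
    Ind pdsP ⟨m, π⟩ := by
  intro x y e
  by_contra hc
  push Not at hc
  have hL : m = x.1 + y.1 := congrArg Sigma.fst e
  refine h ⟨x.1, by omega, by omega, ?_⟩
  intro i hi
  have h1 : ev ⟨m, π⟩ i = (π i : ℕ) := ev_fin ⟨m, π⟩ i
  have h2 := congrArg (fun T => ev T i) e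
  rw [ev_left hi] at h2
  have := ev_lt hi
  omega

theorem ind_of_not_skew {m : ℕ} {π : Equiv.Perm (Fin m)} (h : ¬ SkewDecomp π) :
    Ind pssP ⟨m, π⟩ := by
  intro x y e
  by_contra hc
  push Not at hc
  have hL : m = x.1 + y.1 := congrArg Sigma.fst e
  refine h ⟨x.1, by omega, by omega, ?_⟩
  intro i hi
  have h1 : ev ⟨m, π⟩ i = (π i : ℕ) := ev_fin ⟨m, π⟩ i
  have h2 := congrArg (fun T => ev T i) e
  rw [evs_left hi] at h2
  omega

theorem del_of {a m b : ℕ} {τ : Equiv.Perm (Fin (a + (m + m) + b))}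
    {σ : Equiv.Perm (Fin (a + m + b))} (f : Fin (a + m + b) → Fin (a + (m + m) + b))
    (hf : StrictMono f)
    (hocc : ∀ x y : Fin (a + m + b), σ x ≤ σ y ↔ τ (f x) ≤ τ (f y))
    (hrange : ∀ x : Fin (a + m + b), (f x : ℕ) < a + m ∨ a + (m + m) ≤ (f x : ℕ)) :
    Del ⟨a + m + b, σ⟩ ⟨a + (m + m) + b, τ⟩ (a + m) m := by
  refine ⟨by simp only; omega, ?_⟩
  let g : ℕ → ℕ := fun i => if h : i < a + m + b then f ⟨i, h⟩ else 0
  have hg : ∀ x : Fin (a + m + b), g x = f x := by intro x; simp only [g, x.2, dite_true]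
  have g2 : ∀ i j, i < j → j < a + m + b → g i < g j := by
    intro i j hij hj
    have h1 := hg ⟨i, hij.trans hj⟩
    have h2 := hg ⟨j, hj⟩
    simp only at h1 h2
    rw [h1, h2]
    exact hf hij
  have g1 : ∀ i < a + m + b, g i < a + (m + m) + b ∧ (g i < a + m ∨ a + (m + m) ≤ g i) := by
    intro i hi
    have h1 := hg ⟨i, hi⟩
    simp only at h1
    rw [h1]
    exact ⟨(f ⟨i, hi⟩).2, hrange _⟩
  have lo : ∀ i < a + m + b, i ≤ g i ∧ g i ≤ i + m := by
    intro i hi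
    have b1 := mono_nat g2 0 i (by omega)
    have b2 := mono_nat g2 i (a + m + b - 1 - i) (by omega)
    have b3 := g1 (i + (a + m + b - 1 - i)) (by omega)
    rw [zero_add] at b1
    omega
  have key : ∀ i < a + m + b, g i = sh (a + m) m i := by
    intro i hi
    unfold sh
    split_ifs with h
    · have b1 := mono_nat g2 i (a + m - 1 - i) (by omega)
      have b2 := g1 (i + (a + m - 1 - i)) (by omega)
      have b3 := lo (i + (a + m - 1 - i)) (by omega)
      have b4 := lo i hi
      omega
    · have b1 := mono_nat g2 (a + m) (i - (a + m)) (by omega)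
      rw [show a + m + (i - (a + m)) = i by omega] at b1
      have b2 := g1 (a + m) (by omega)
      have b3 := lo (a + m) (by omega)
      have b4 := lo i hi
      omega
  intro i hi j hj
  rw [← key i hi, ← key j hj]
  have h1 := hg ⟨i, hi⟩
  have h2 := hg ⟨j, hj⟩
  simp only at h1 h2
  rw [h1, h2, ev_fin ⟨a + (m + m) + b, τ⟩ (f ⟨i, hi⟩), ev_fin ⟨a + (m + m) + b, τ⟩ (f ⟨j, hj⟩),
    ev_of_lt (T := ⟨a + m + b, σ⟩) hi, ev_of_lt (T := ⟨a + m + b, σ⟩) hj]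
  exact hocc _ _

end SDB

/-- Let `σ, τ` be separable with `|τ| − |σ| ≥ 3`. Suppose `τ` has a contiguous
subword (positions `a, …, a+2m−1`) of contiguous letters (values `v, …,
v+2m−1`) flattening to `π ⊕ π` with `π` indecomposable (or to `π ⊖ π` with `π`
skew indecomposable), and `σ` is obtained from `τ` by removing one of these
copies of `π` (witnessed by an occurrence `f` of `σ` in `τ` whose image is
exactly the complement of one copy). Then `(σ,τ)` is disconnected. -/
theorem separable_doubled_block_disconnected (a m b : ℕ) (hm : 3 ≤ m)
    (τ : Equiv.Perm (Fin (a + (m + m) + b))) (σ : Equiv.Perm (Fin (a + m + b)))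
    (hsepτ : Separable ⟨a + (m + m) + b, τ⟩)
    (hsepσ : Separable ⟨a + m + b, σ⟩)
    (π : Equiv.Perm (Fin m)) (v : ℕ)
    (hblock :
      ((∀ i : Fin (m + m), (τ ⟨a + (i : ℕ), by omega⟩ : ℕ) = v + ((pds π π) i : ℕ)) ∧
        ¬ Decomp π) ∨
      ((∀ i : Fin (m + m), (τ ⟨a + (i : ℕ), by omega⟩ : ℕ) = v + ((pss π π) i : ℕ)) ∧
        ¬ SkewDecomp π))
    (f : Fin (a + m + b) → Fin (a + (m + m) + b))
    (hf : StrictMono f)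
    (hocc : ∀ x y : Fin (a + m + b), σ x ≤ σ y ↔ τ (f x) ≤ τ (f y))
    (hrange : ∀ x : Fin (a + m + b), (f x : ℕ) < a + m ∨ a + (m + m) ≤ (f x : ℕ)) :
    Disconn {ρ : PermPt | plt ⟨a + m + b, σ⟩ ρ ∧ plt ρ ⟨a + (m + m) + b, τ⟩} := by
  have hd := SDB.del_of f hf hocc hrange
  have hex : ∃ S, SDB.Dis S ⟨a + (m + m) + b, τ⟩ ∧ SDB.Del S ⟨a + (m + m) + b, τ⟩ (a + m) m := by
    rcases hblock with ⟨hv, hπ⟩ | ⟨hv, hπ⟩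
    · obtain ⟨S, h1, h2⟩ := SDB.main hsepτ ⟨m, π⟩ hm (SDB.ind_of_not_decomp hπ) a v
        (by simp only; omega) (by
          intro i hi
          have := hv ⟨i, hi⟩
          rw [SDB.ev_of_lt (T := ⟨a + (m + m) + b, τ⟩) (show a + i < a + (m + m) + b by
            simp only at hi; omega),
            SDB.ev_of_lt (T := pdsP ⟨m, π⟩ ⟨m, π⟩) hi]
          exact_mod_cast this)
      exact ⟨S, h1.2.2, h2⟩
    · exact SDB.main_skew hsepτ ⟨m, π⟩ hm (SDB.ind_of_not_skew hπ) a v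
        (by simp only; omega) (by
          intro i hi
          have := hv ⟨i, hi⟩
          rw [SDB.ev_of_lt (T := ⟨a + (m + m) + b, τ⟩) (show a + i < a + (m + m) + b by
            simp only at hi; omega),
            SDB.ev_of_lt (T := pssP ⟨m, π⟩ ⟨m, π⟩) hi]
          exact_mod_cast this)
  obtain ⟨S, h1, h2⟩ := hex
  rw [SDB.Del_unique h2 hd] at h1
  exact h1.disconn
end
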